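/- arXiv:1303.6030 — 3 statements merged into one kernel-verified Lean document; each statement's English description precedes it below -/
import Mathlib

section
/- Let K be an infinite field, S = K[x_1,...,x_n], and let I ⊆ S and J ⊆ S be homogeneous ideals. Then for a general change of coordinates g ∈ GL_n(K), one has H(I·g(J), d) ≥ H(Gin_lex(I)·Gin_oplex(J), d) for all d ≥ 0. -/
open MvPolynomial TensorProduct CategoryTheory

noncomputable section

/-- The polynomial ring `S = K[x_1,...,x_n]`, standard graded. -/
abbrev PS (K : Type) [Field K] (n : ℕ) : Type := MvPolynomial (Fin n) K

variable (K : Type) [Field K] (n : ℕ)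

/-- An ideal of `S` is homogeneous if it contains all homogeneous components of its
elements. -/
def IsHomog (I : Ideal (PS K n)) : Prop :=
  ∀ f ∈ I, ∀ d : ℕ, MvPolynomial.homogeneousComponent d f ∈ I

/-- The change of coordinates of `S` induced by `g ∈ GL_n(K)`, determined by
`g(x_i) = ∑_j g_{ji} x_j`. -/
def coordChange (g : GL (Fin n) K) : PS K n →ₐ[K] PS K n :=
  MvPolynomial.aeval (fun i => ∑ j, ((g : Matrix (Fin n) (Fin n) K) j i) • MvPolynomial.X j)

/-- A property `P` holds for a general change of coordinates `g ∈ GL_n(K)` if there is a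
nonempty Zariski open subset `U ⊆ GL_n(K)` on which it holds; equivalently (as `GL_n(K)` is
an irreducible variety over the infinite field `K`) there is a nonzero polynomial `F` in the
matrix entries such that `P g` holds whenever `F` does not vanish at `g`. -/
def generally (P : GL (Fin n) K → Prop) : Prop :=
  ∃ F : MvPolynomial (Fin n × Fin n) K, F ≠ 0 ∧
    ∀ g : GL (Fin n) K,
      MvPolynomial.eval (fun p => (g : Matrix (Fin n) (Fin n) K) p.1 p.2) F ≠ 0 → P g

/-- The Hilbert function: `H(I,d) = dim_K I_d`. -/
def hilb (I : Ideal (PS K n)) (d : ℕ) : ℕ :=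
  Module.finrank K ↥(Submodule.restrictScalars K I ⊓ homogeneousSubmodule (Fin n) K d)

/-- `a <_lex b` for the lexicographic order induced by `x_1 > x_2 > ⋯ > x_n`. -/
def lexLt (a b : Fin n →₀ ℕ) : Prop := Finsupp.Lex (· < ·) (· < ·) a b

/-- `a <_oplex b` for the (opposite) lexicographic order induced by `x_n > ⋯ > x_1`. -/
def oplexLt (a b : Fin n →₀ ℕ) : Prop := Finsupp.Lex (· > ·) (· < ·) a b

/-- The total degree of an exponent vector. -/
def expDeg (m : Fin n →₀ ℕ) : ℕ := ∑ i, m i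

/-- A monomial ideal: together with any polynomial it contains each of its monomials. -/
def IsMonomialIdeal (I : Ideal (PS K n)) : Prop :=
  ∀ f ∈ I, ∀ m ∈ f.support, MvPolynomial.monomial m (1 : K) ∈ I

/-- A lex ideal: a monomial ideal whose monomials form a lex set. -/
def IsLexIdeal (I : Ideal (PS K n)) : Prop :=
  IsMonomialIdeal K n I ∧ ∀ u v : Fin n →₀ ℕ, expDeg n u = expDeg n v →
    MvPolynomial.monomial u (1 : K) ∈ I → lexLt n u v →
      MvPolynomial.monomial v (1 : K) ∈ I

/-- An opposite lex ideal: a monomial ideal whose monomials form an opposite lex set. -/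
def IsOplexIdeal (I : Ideal (PS K n)) : Prop :=
  IsMonomialIdeal K n I ∧ ∀ u v : Fin n →₀ ℕ, expDeg n u = expDeg n v →
    MvPolynomial.monomial u (1 : K) ∈ I → oplexLt n u v →
      MvPolynomial.monomial v (1 : K) ∈ I

/-- The initial ideal `in_r(I)` of `I` with respect to a (strict) monomial order `r`:
the ideal generated by the `r`-maximal monomials of the nonzero elements of `I`. -/
def initialIdealO (r : (Fin n →₀ ℕ) → (Fin n →₀ ℕ) → Prop) (I : Ideal (PS K n)) :
    Ideal (PS K n) :=
  Ideal.span {g | ∃ f ∈ I, ∃ m ∈ f.support,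
    (∀ m' ∈ f.support, m' = m ∨ r m' m) ∧ g = MvPolynomial.monomial m (1 : K)}

theorem exists_GL_eval_ne [Infinite K] (F : MvPolynomial (Fin n × Fin n) K) (hF : F ≠ 0) :
    ∃ g : GL (Fin n) K,
      MvPolynomial.eval (fun p => (g : Matrix (Fin n) (Fin n) K) p.1 p.2) F ≠ 0 := by
  by_contra! h
  have h1 : F * (Matrix.mvPolynomialX (Fin n) (Fin n) K).det = 0 := by
    apply MvPolynomial.funext
    intro s
    rw [map_mul, map_zero, Matrix.eval_det_mvPolynomialX]
    by_cases hd : (Matrix.of fun i j => s (i, j)).det = 0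
    · exact mul_eq_zero_of_right _ hd
    · have := h (Matrix.GeneralLinearGroup.mkOfDetNeZero _ hd)
      exact mul_eq_zero_of_left this _
  rcases mul_eq_zero.1 h1 with h2 | h2
  · exact hF h2
  · exact Matrix.det_mvPolynomialX_ne_zero (Fin n) K h2

theorem coordChange_X (g : GL (Fin n) K) (i : Fin n) :
    coordChange K n g (X i) = ∑ j, ((g : Matrix (Fin n) (Fin n) K) j i) • X j := by
  simp [coordChange]

theorem coordChange_mul (g h : GL (Fin n) K) (p : PS K n) :
    coordChange K n (g * h) p = coordChange K n g (coordChange K n h p) := by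
  have : coordChange K n (g * h) = (coordChange K n g).comp (coordChange K n h) := by
    apply MvPolynomial.algHom_ext
    intro i
    rw [AlgHom.comp_apply, coordChange_X, coordChange_X, map_sum]
    simp only [map_smul, coordChange_X, Finset.smul_sum, smul_smul]
    rw [Finset.sum_comm]
    refine Finset.sum_congr rfl fun j _ => ?_
    rw [← Finset.sum_smul]
    congr 1
    simp only [Matrix.GeneralLinearGroup.coe_mul, Matrix.mul_apply]
    exact Finset.sum_congr rfl fun k _ => mul_comm _ _
  rw [this]; rfl

theorem coordChange_one (p : PS K n) : coordChange K n 1 p = p := by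
  have : coordChange K n 1 = AlgHom.id K _ := by
    apply MvPolynomial.algHom_ext
    intro i
    rw [coordChange_X]
    simp [Matrix.one_apply]
  rw [this]; rfl

theorem coordChange_hom (g : GL (Fin n) K) (p : PS K n) (d : ℕ) (hp : p.IsHomogeneous d) :
    (coordChange K n g p).IsHomogeneous d := by
  have := hp.aeval (S := K) (n := 1)
    (fun i => ∑ j, ((g : Matrix (Fin n) (Fin n) K) j i) • (X j : PS K n)) (by
      intro i
      apply IsHomogeneous.sum
      intro j _
      rw [smul_eq_C_mul]
      exact isHomogeneous_C_mul_X _ _)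
  simpa [coordChange] using this

theorem coordChange_comp (g : GL (Fin n) K) (p : PS K n) (d : ℕ) :
    homogeneousComponent d (coordChange K n g p) =
      coordChange K n g (homogeneousComponent d p) := by
  conv_lhs => rw [← sum_homogeneousComponent p]
  rw [map_sum, map_sum]
  have : ∀ i ∈ Finset.range (p.totalDegree + 1),
      homogeneousComponent d (coordChange K n g (homogeneousComponent i p)) =
      if i = d then coordChange K n g (homogeneousComponent d p) else 0 := by
    intro i _
    rw [homogeneousComponent_of_mem (m := d) (n := i)
      (coordChange_hom K n g _ i (homogeneousComponent_isHomogeneous i p))]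
    by_cases h : i = d
    · subst h; simp
    · rw [if_neg h, if_neg (fun h' => h h'.symm)]
  rw [Finset.sum_congr rfl this, Finset.sum_ite_eq']
  split_ifs with h
  · rfl
  · rw [homogeneousComponent_eq_zero, map_zero]
    simpa using h

theorem mem_map_coordChange (g : GL (Fin n) K) (I : Ideal (PS K n)) (f : PS K n) :
    f ∈ Ideal.map (coordChange K n g) I ↔ ∃ a ∈ I, coordChange K n g a = f := by
  rw [Ideal.mem_map_iff_of_surjective]
  intro y
  exact ⟨coordChange K n g⁻¹ y, by rw [← coordChange_mul, mul_inv_cancel, coordChange_one]⟩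

/-- diagonal coordinate changes -/
theorem coeff_coordChange_diag (g : GL (Fin n) K) (δ : Fin n → K)
    (hg : (g : Matrix (Fin n) (Fin n) K) = Matrix.diagonal δ) (p : PS K n) (a : Fin n →₀ ℕ) :
    coeff a (coordChange K n g p) = coeff a p * ∏ i, δ i ^ a i := by
  induction p using MvPolynomial.induction_on' with
  | monomial u c =>
    have : coordChange K n g (monomial u c) = monomial u (c * ∏ i, δ i ^ u i) := by
      rw [coordChange, aeval_monomial, hg]
      have h2 : ∀ i, ∑ j, Matrix.diagonal δ j i • (X j : PS K n) = C (δ i) * X i := by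
        intro i
        rw [Finset.sum_eq_single i]
        · simp [smul_eq_C_mul]
        · intro j _ hj
          simp [Matrix.diagonal_apply_ne _ hj]
        · simp
      simp only [h2, algebraMap_eq, mul_pow]
      rw [Finsupp.prod_fintype _ _ (by simp), Finset.prod_mul_distrib, ← mul_assoc]
      rw [monomial_eq, Finsupp.prod_fintype _ _ (by simp)]
      simp
    rw [this, coeff_monomial, coeff_monomial]
    split_ifs with h
    · rw [h]
    · simp
  | add p q hp hq => simp [hp, hq, add_mul]

/-- abstract monomial-order-like relation -/
structure GoodRel (r : (Fin n →₀ ℕ) → (Fin n →₀ ℕ) → Prop) : Prop where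
  shift : ∀ a b c, r a b → r (a + c) (b + c)
  weight : ∀ d : ℕ, ∃ w : Fin n → ℕ, ∀ a b : Fin n →₀ ℕ, a.degree ≤ d → r a b →
    ∑ i, w i * a i < ∑ i, w i * b i

theorem goodRel_of (r : (Fin n →₀ ℕ) → (Fin n →₀ ℕ) → Prop) (τ : Fin n → ℕ)
    (hτ : Function.Injective τ)
    (hr : ∀ a b, r a b ↔ ∃ j, (∀ k, τ j < τ k → a k = b k) ∧ a j < b j) : GoodRel n r := by
  constructor
  · intro a b c
    rw [hr, hr]
    rintro ⟨j, h1, h2⟩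
    exact ⟨j, fun k hk => by simp [h1 k hk], by simpa using h2⟩
  · intro d
    refine ⟨fun i => (d + 1) ^ τ i, fun a b ha hab => ?_⟩
    obtain ⟨j, h1, h2⟩ := (hr a b).1 hab
    have hsum : ∑ k ∈ Finset.univ.filter (fun k => τ k < τ j), (d + 1) ^ τ k * a k
        < (d + 1) ^ τ j := by
      have : (d + 1) * ∑ k ∈ Finset.univ.filter (fun k => τ k < τ j), (d + 1) ^ τ k * a k
          ≤ (d + 1) ^ τ j * d := by
        calc _ = ∑ k ∈ Finset.univ.filter (fun k => τ k < τ j), (d + 1) ^ (τ k + 1) * a k := by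
              rw [Finset.mul_sum]
              exact Finset.sum_congr rfl fun k _ => by ring
          _ ≤ ∑ k ∈ Finset.univ.filter (fun k => τ k < τ j), (d + 1) ^ (τ j) * a k := by
              refine Finset.sum_le_sum fun k hk => ?_
              have : τ k + 1 ≤ τ j := (Finset.mem_filter.1 hk).2
              gcongr
              omega
          _ ≤ ∑ k, (d + 1) ^ (τ j) * a k :=
              Finset.sum_le_sum_of_subset (Finset.filter_subset _ _)
          _ = (d + 1) ^ (τ j) * a.degree := by
              rw [← Finset.mul_sum, Finsupp.degree_eq_sum]
          _ ≤ _ := by gcongr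
      have hp : 0 < (d + 1) ^ τ j := by positivity
      nlinarith
    have split : ∀ c : Fin n →₀ ℕ, ∑ k, (d + 1) ^ τ k * c k =
        ∑ k ∈ Finset.univ.filter (fun k => τ k < τ j), (d + 1) ^ τ k * c k
        + ((d + 1) ^ τ j * c j
        + ∑ k ∈ Finset.univ.filter (fun k => τ j < τ k), (d + 1) ^ τ k * c k) := by
      intro c
      rw [← Finset.sum_filter_add_sum_filter_not Finset.univ (fun k => τ k < τ j)]
      congr 1
      have : Finset.univ.filter (fun k => ¬ τ k < τ j) =
          insert j (Finset.univ.filter (fun k => τ j < τ k)) := by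
        ext k
        simp only [Finset.mem_filter, Finset.mem_univ, true_and, Finset.mem_insert]
        constructor
        · intro h
          rcases (not_lt.1 h).eq_or_lt with h | h
          · exact Or.inl (hτ h.symm)
          · exact Or.inr h
        · rintro (h | h)
          · simp [h]
          · omega
      rw [this, Finset.sum_insert (by simp)]
    rw [split a, split b]
    have h3 : ∑ k ∈ Finset.univ.filter (fun k => τ j < τ k), (d + 1) ^ τ k * a k =
        ∑ k ∈ Finset.univ.filter (fun k => τ j < τ k), (d + 1) ^ τ k * b k :=
      Finset.sum_congr rfl fun k hk => by rw [h1 k (Finset.mem_filter.1 hk).2]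
    have h4 : (d + 1) ^ τ j * (a j + 1) ≤ (d + 1) ^ τ j * b j := Nat.mul_le_mul_left _ h2
    rw [h3]
    have : 0 ≤ ∑ k ∈ Finset.univ.filter (fun k => τ k < τ j), (d + 1) ^ τ k * b k := Nat.zero_le _
    linarith

theorem goodRel_lex : GoodRel n (lexLt n) := by
  refine goodRel_of n _ (fun k => n - 1 - k) ?_ ?_
  · intro a b h
    simp only at h
    ext
    omega
  · intro a b
    unfold lexLt
    rw [Finsupp.lex_def]
    refine exists_congr fun j => and_congr_left fun _ => forall_congr' fun k => ?_
    have : k < j ↔ n - 1 - (j : ℕ) < n - 1 - (k : ℕ) := by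
      rw [Fin.lt_def]; omega
    rw [this]

theorem goodRel_oplex : GoodRel n (oplexLt n) := by
  refine goodRel_of n _ (fun k => k) (fun a b h => Fin.ext h) ?_
  intro a b
  unfold oplexLt
  rw [Finsupp.lex_def]
  exact Iff.rfl

/-- `m` is the leading exponent of `f` -/
def IsLead (r : (Fin n →₀ ℕ) → (Fin n →₀ ℕ) → Prop) (f : PS K n) (m : Fin n →₀ ℕ) : Prop :=
  m ∈ f.support ∧ ∀ m' ∈ f.support, m' = m ∨ r m' m

/-- leading exponents of an ideal -/
def leadSet (r : (Fin n →₀ ℕ) → (Fin n →₀ ℕ) → Prop) (I : Ideal (PS K n)) :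
    Set (Fin n →₀ ℕ) := {m | ∃ f ∈ I, IsLead K n r f m}

theorem initialIdealO_eq (r : (Fin n →₀ ℕ) → (Fin n →₀ ℕ) → Prop) (I : Ideal (PS K n)) :
    initialIdealO K n r I = Ideal.span ((fun m => monomial m (1 : K)) '' leadSet K n r I) := by
  unfold initialIdealO
  congr 1
  ext g
  constructor
  · rintro ⟨f, hf, m, hm, h, rfl⟩
    exact ⟨m, ⟨f, hf, hm, h⟩, rfl⟩
  · rintro ⟨m, ⟨f, hf, hm, h⟩, rfl⟩
    exact ⟨f, hf, m, hm, h, rfl⟩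

theorem exists_hom_lead (r : (Fin n →₀ ℕ) → (Fin n →₀ ℕ) → Prop) (hr : GoodRel n r)
    (I : Ideal (PS K n)) (hI : IsHomog K n I) (h : GL (Fin n) K) (u c : Fin n →₀ ℕ)
    (hu : u ∈ leadSet K n r (Ideal.map (coordChange K n h) I)) :
    ∃ a ∈ I, a.IsHomogeneous (u + c).degree ∧ IsLead K n r (coordChange K n h a) (u + c) := by
  obtain ⟨f, hf, hu1, hu2⟩ := hu
  have hf' : monomial c (1 : K) * f ∈ Ideal.map (coordChange K n h) I := Ideal.mul_mem_left _ _ hf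
  obtain ⟨a, ha, hfa⟩ := (mem_map_coordChange K n h I _).1 hf'
  refine ⟨homogeneousComponent (u + c).degree a, hI a ha _,
    homogeneousComponent_isHomogeneous _ _, ?_⟩
  rw [← coordChange_comp, hfa]
  constructor
  · rw [mem_support_iff, coeff_homogeneousComponent, if_pos rfl, add_comm u c, coeff_monomial_mul]
    simpa using hu1
  · intro m' hm'
    rw [mem_support_iff, coeff_homogeneousComponent] at hm'
    split_ifs at hm' with h1
    · rw [coeff_monomial_mul'] at hm'
      split_ifs at hm' with h2
      · obtain ⟨e, rfl⟩ := exists_add_of_le h2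
        rw [add_tsub_cancel_left, one_mul] at hm'
        rw [add_comm c e]
        rcases hu2 e (mem_support_iff.2 hm') with h3 | h3
        · exact Or.inl (by rw [h3])
        · exact Or.inr (hr.shift _ _ _ h3)
      · exact (hm' rfl).elim
    · exact (hm' rfl).elim

/-- The degeneration argument. -/
theorem exists_linInd [Infinite K] (r₁ r₂ : (Fin n →₀ ℕ) → (Fin n →₀ ℕ) → Prop)
    (hr₁ : GoodRel n r₁) (hr₂ : GoodRel n r₂) (h₁ h₂ : GL (Fin n) K) (d : ℕ)
    (ι : Type) [Fintype ι] [DecidableEq ι] (M u v : ι → (Fin n →₀ ℕ)) (hM : Function.Injective M)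
    (huv : ∀ i, u i + v i = M i) (hd : ∀ i, (M i).degree = d) (a b : ι → PS K n)
    (ha : ∀ i, IsLead K n r₁ (coordChange K n h₁ (a i)) (u i))
    (hb : ∀ i, IsLead K n r₂ (coordChange K n h₂ (b i)) (v i)) :
    ∃ g : GL (Fin n) K, LinearIndependent K (fun i => a i * coordChange K n g (b i)) := by
  obtain ⟨w₁, hw₁⟩ := hr₁.weight d
  obtain ⟨w₂, hw₂⟩ := hr₂.weight d
  set f : ι → PS K n := fun i => coordChange K n h₁ (a i) with hf
  set q : ι → PS K n := fun i => coordChange K n h₂ (b i) with hq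
  set wt₁ : (Fin n →₀ ℕ) → ℕ := fun m => ∑ i, w₁ i * m i with hwt₁
  set wt₂ : (Fin n →₀ ℕ) → ℕ := fun m => ∑ i, w₂ i * m i with hwt₂
  -- key inequality
  have key : ∀ i j x y, x + y = M i → coeff x (f j) * coeff y (q j) ≠ 0 →
      (x = u j ∧ y = v j) ∨ wt₁ x + wt₂ y < wt₁ (u j) + wt₂ (v j) := by
    intro i j x y hxy hne
    have hdeg : x.degree + y.degree = d := by
      rw [← hd i, ← hxy, map_add]
    have hx := (ha j).2 x (mem_support_iff.2 (left_ne_zero_of_mul hne))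
    have hy := (hb j).2 y (mem_support_iff.2 (right_ne_zero_of_mul hne))
    rcases hx with hx | hx <;> rcases hy with hy | hy
    · exact Or.inl ⟨hx, hy⟩
    · have := hw₂ _ _ (by omega) hy
      right; subst hx; simpa [hwt₂] using this
    · have := hw₁ _ _ (by omega) hx
      right; subst hy; simpa [hwt₁] using this
    · have := hw₂ _ _ (by omega) hy
      have := hw₁ _ _ (by omega) hx
      right; simp only [hwt₁, hwt₂]; omega
  let N : Matrix ι ι (Polynomial K) := Matrix.of fun i j =>
    ∑ x ∈ Finset.HasAntidiagonal.antidiagonal (M i), Polynomial.C (coeff x.1 (f j) * coeff x.2 (q j)) *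
      Polynomial.X ^ (wt₁ (u j) + wt₂ (v j) - (wt₁ x.1 + wt₂ x.2))
  have hN0 : (Polynomial.evalRingHom (0 : K)).mapMatrix N =
      Matrix.diagonal (fun j => coeff (u j) (f j) * coeff (v j) (q j)) := by
    ext i j
    have hterm : ∀ x ∈ Finset.HasAntidiagonal.antidiagonal (M i),
        Polynomial.eval 0 (Polynomial.C (coeff x.1 (f j) * coeff x.2 (q j)) *
        Polynomial.X ^ (wt₁ (u j) + wt₂ (v j) - (wt₁ x.1 + wt₂ x.2))) =
        if x = (u j, v j) then coeff (u j) (f j) * coeff (v j) (q j) else 0 := by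
      intro x hx
      by_cases hne : coeff x.1 (f j) * coeff x.2 (q j) = 0
      · rw [hne]
        split_ifs with h
        · rw [← hne, h]; simp [h ▸ hne]
        · simp
      · rcases key i j x.1 x.2 (Finset.HasAntidiagonal.mem_antidiagonal.1 hx) hne with ⟨h1, h2⟩ | h
        · have : x = (u j, v j) := Prod.ext h1 h2
          subst this
          simp
        · rw [if_neg]
          · rw [Polynomial.eval_mul, Polynomial.eval_pow, Polynomial.eval_X, zero_pow (by omega),
              mul_zero]
          · rintro rfl
            exact lt_irrefl _ h
    simp only [RingHom.mapMatrix_apply, Matrix.map_apply, N, Matrix.of_apply, Polynomial.coe_evalRingHom,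
      Polynomial.eval_finsetSum]
    rw [Finset.sum_congr rfl hterm, Finset.sum_ite_eq', Matrix.diagonal_apply]
    by_cases hij : i = j
    · subst hij
      simp [huv]
    · rw [if_neg, if_neg hij]
      rw [Finset.HasAntidiagonal.mem_antidiagonal, huv]
      exact fun h => hij (hM h.symm)
  have hdet : N.det ≠ 0 := by
    intro h
    have h1 : ((Polynomial.evalRingHom (0 : K)).mapMatrix N).det = 0 := by
      rw [← RingHom.map_det, h, map_zero]
    rw [hN0, Matrix.det_diagonal, Finset.prod_eq_zero_iff] at h1
    obtain ⟨j, _, hj⟩ := h1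
    rcases mul_eq_zero.1 hj with h2 | h2
    · exact mem_support_iff.1 (ha j).1 h2
    · exact mem_support_iff.1 (hb j).1 h2
  obtain ⟨t, ht⟩ : ∃ t : K, Polynomial.eval t (Polynomial.X * N.det) ≠ 0 := by
    by_contra! h
    have : Polynomial.X * N.det = 0 := Polynomial.funext (by simpa using h)
    rcases mul_eq_zero.1 this with h | h
    · exact Polynomial.X_ne_zero h
    · exact hdet h
  rw [Polynomial.eval_mul, Polynomial.eval_X] at ht
  have ht0 : t ≠ 0 := left_ne_zero_of_mul ht
  have htd : ((Polynomial.evalRingHom t).mapMatrix N).det ≠ 0 := by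
    rw [← RingHom.map_det]
    exact right_ne_zero_of_mul ht
  let D : (Fin n → ℕ) → GL (Fin n) K := fun w =>
    Matrix.GeneralLinearGroup.mkOfDetNeZero (Matrix.diagonal fun i => (t ^ w i)⁻¹) (by
      rw [Matrix.det_diagonal, Finset.prod_ne_zero_iff]
      intro i _
      exact inv_ne_zero (pow_ne_zero _ ht0))
  have hD : ∀ w (p : PS K n) x, coeff x (coordChange K n (D w) p) =
      coeff x p * (t ^ (∑ i, w i * x i))⁻¹ := by
    intro w p x
    rw [coeff_coordChange_diag K n (D w) (fun i => (t ^ w i)⁻¹) rfl]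
    congr 1
    rw [← Finset.prod_pow_eq_pow_sum, ← Finset.prod_inv_distrib]
    exact Finset.prod_congr rfl fun i _ => by rw [inv_pow, ← pow_mul]
  refine ⟨h₁⁻¹ * (D w₁)⁻¹ * D w₂ * h₂, ?_⟩
  have himg : ∀ j, coordChange K n (D w₁ * h₁)
      (a j * coordChange K n (h₁⁻¹ * (D w₁)⁻¹ * D w₂ * h₂) (b j)) =
      coordChange K n (D w₁) (f j) * coordChange K n (D w₂) (q j) := by
    intro j
    rw [map_mul, ← coordChange_mul]
    have : D w₁ * h₁ * (h₁⁻¹ * (D w₁)⁻¹ * D w₂ * h₂) = D w₂ * h₂ := by group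
    rw [this, coordChange_mul, coordChange_mul]
  have hcoef : ∀ i j, coeff (M i) (coordChange K n (D w₁) (f j) * coordChange K n (D w₂) (q j)) =
      ((Polynomial.evalRingHom t).mapMatrix N) i j * (t ^ (wt₁ (u j) + wt₂ (v j)))⁻¹ := by
    intro i j
    simp only [RingHom.mapMatrix_apply, Matrix.map_apply, N, Matrix.of_apply, Polynomial.coe_evalRingHom,
      Polynomial.eval_finsetSum]
    rw [coeff_mul, Finset.sum_mul]
    refine Finset.sum_congr rfl fun x hx => ?_
    rw [hD, hD]
    by_cases hne : coeff x.1 (f j) * coeff x.2 (q j) = 0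
    · rw [hne]
      rw [mul_mul_mul_comm, hne]
      simp
    · have hle : wt₁ x.1 + wt₂ x.2 ≤ wt₁ (u j) + wt₂ (v j) := by
        rcases key i j x.1 x.2 (Finset.HasAntidiagonal.mem_antidiagonal.1 hx) hne with ⟨h1, h2⟩ | h
        · rw [h1, h2]
        · exact h.le
      obtain ⟨e, he⟩ := exists_add_of_le hle
      rw [he, add_tsub_cancel_left, Polynomial.eval_mul, Polynomial.eval_C, Polynomial.eval_pow,
        Polynomial.eval_X, mul_mul_mul_comm, mul_assoc (coeff x.1 (f j) * coeff x.2 (q j))]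
      congr 1
      rw [pow_add, pow_add]
      field_simp
      rfl
  rw [Fintype.linearIndependent_iff]
  intro c hc
  have h0 : ((Polynomial.evalRingHom t).mapMatrix N).mulVec
      (fun j => c j * (t ^ (wt₁ (u j) + wt₂ (v j)))⁻¹) = 0 := by
    ext i
    have h1 := congrArg (fun p => coeff (M i) (coordChange K n (D w₁ * h₁) p)) hc
    simp only [map_sum, map_smul, himg, map_zero, coeff_sum, coeff_smul, coeff_zero, hcoef,
      smul_eq_mul] at h1
    rw [Matrix.mulVec, dotProduct, Pi.zero_apply, ← h1]
    exact Finset.sum_congr rfl fun j _ => by ring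
  have h2 := Matrix.eq_zero_of_mulVec_eq_zero htd h0
  intro j
  have h3 := congrFun h2 j
  simp only [Pi.zero_apply] at h3
  exact (mul_eq_zero.1 h3).resolve_right (inv_ne_zero (pow_ne_zero _ ht0))

/-- lifting linear independence from a specialization -/
theorem linInd_lift {σ ι R : Type} [CommRing R] [IsDomain R] [Fintype ι] [DecidableEq ι]
    (φ : R →+* K) (ψ : K →+* R) (hφψ : ∀ c, φ (ψ c) = c) (p : ι → MvPolynomial σ R)
    (hp : LinearIndependent K (fun i => MvPolynomial.map φ (p i))) : LinearIndependent R p := by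
  obtain ⟨L, hL⟩ := LinearMap.exists_leftInverse_of_injective _ (LinearMap.ker_eq_bot.2 hp)
  have hL' : ∀ j, L (MvPolynomial.map φ (p j)) = Finsupp.single j 1 := by
    intro j
    have := LinearMap.congr_fun hL (Finsupp.single j 1)
    simpa using this
  let Λ : ι → (MvPolynomial σ R →ₗ[R] R) := fun i =>
    (basisMonomials σ R).constr R (fun m => ψ (L (monomial m 1) i))
  have hΛ : ∀ i q, φ (Λ i q) = L (MvPolynomial.map φ q) i := by
    intro i q
    induction q using MvPolynomial.induction_on' with
    | monomial u c =>
      have h1 : (monomial u c : MvPolynomial σ R) = c • basisMonomials σ R u := by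
        simp [smul_monomial]
      have h2 : (monomial u (φ c) : MvPolynomial σ K) = φ c • monomial u 1 := by
        simp [smul_monomial]
      rw [map_monomial, h2, h1, LinearMap.map_smul, LinearMap.map_smul, smul_eq_mul, map_mul]
      simp only [Λ, Module.Basis.constr_basis]
      simp [hφψ]
    | add a b ha hb => simp [ha, hb]
  let M : Matrix ι ι R := Matrix.of fun i j => Λ i (p j)
  have hM : φ.mapMatrix M = 1 := by
    ext i j
    simp only [RingHom.mapMatrix_apply, Matrix.map_apply, M, Matrix.of_apply, hΛ, hL',
      Matrix.one_apply, Finsupp.single_apply]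
    simp only [eq_comm]
  have hdet : M.det ≠ 0 := by
    intro h
    have : φ M.det = 1 := by rw [RingHom.map_det, hM, Matrix.det_one]
    rw [h, map_zero] at this
    exact zero_ne_one this
  rw [Fintype.linearIndependent_iff]
  intro c hc
  have h0 : M.mulVec c = 0 := by
    ext i
    have := congrArg (Λ i) hc
    simp only [map_sum, map_smul, map_zero, smul_eq_mul] at this
    rw [Matrix.mulVec, dotProduct, Pi.zero_apply, ← this]
    exact Finset.sum_congr rfl fun j _ => mul_comm _ _
  intro j
  exact congrFun (Matrix.eq_zero_of_mulVec_eq_zero hdet h0) j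

/-- Leading exponents (lex) of homogeneous elements of an ideal -/
def homLead {R : Type} [CommRing R] (A : Ideal (MvPolynomial (Fin n) R)) : Set (Fin n →₀ ℕ) :=
  {m | ∃ f ∈ A, f.IsHomogeneous m.degree ∧ f ≠ 0 ∧ MonomialOrder.lex.degree f = m}

theorem mem_degFinset (d : ℕ) (m : Fin n →₀ ℕ) :
    m ∈ Finset.finsuppAntidiag (Finset.univ : Finset (Fin n)) d ↔ m.degree = d := by
  rw [Finset.mem_finsuppAntidiag, Finsupp.degree_eq_sum]
  simp

open Classical in
theorem card_le_homLead {R : Type} [CommRing R] [IsDomain R] (A : Ideal (MvPolynomial (Fin n) R))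
    {ι : Type} [Fintype ι] (d : ℕ) (p : ι → MvPolynomial (Fin n) R) (hp : ∀ i, p i ∈ A)
    (hd : ∀ i, (p i).IsHomogeneous d) (hl : LinearIndependent R p) :
    Fintype.card ι ≤
      ((Finset.finsuppAntidiag (Finset.univ : Finset (Fin n)) d).filter (· ∈ homLead n A)).card := by
  set E := (Finset.finsuppAntidiag (Finset.univ : Finset (Fin n)) d).filter (· ∈ homLead n A)
    with hE
  let Φ : (ι → R) →ₗ[R] (E → R) :=
    LinearMap.pi fun e => (lcoeff R e.1).comp (Fintype.linearCombination R p)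
  have hΦ : Function.Injective Φ := by
    rw [injective_iff_map_eq_zero]
    intro c hc
    set q := Fintype.linearCombination R p c with hq
    have hqs : q = ∑ i, c i • p i := rfl
    have hq0 : q = 0 := by
      by_contra hne
      have hqA : q ∈ A := by
        rw [hqs]
        refine Ideal.sum_mem _ fun i _ => ?_
        rw [smul_eq_C_mul]
        exact Ideal.mul_mem_left _ _ (hp i)
      have hqh : q.IsHomogeneous d := by
        rw [hqs]
        refine IsHomogeneous.sum _ _ _ fun i _ => ?_
        rw [smul_eq_C_mul]
        exact (hd i).C_mul _
      have hdeg : (MonomialOrder.lex.degree q).degree = d := by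
        by_contra hdd
        exact (MonomialOrder.lex.coeff_degree_ne_zero_iff.2 hne) (hqh.coeff_eq_zero hdd)
      have hmem : MonomialOrder.lex.degree q ∈ E := by
        rw [hE, Finset.mem_filter, mem_degFinset]
        exact ⟨hdeg, q, hqA, by rw [hdeg]; exact hqh, hne, rfl⟩
      have := congrFun hc ⟨_, hmem⟩
      exact (MonomialOrder.lex.coeff_degree_ne_zero_iff.2 hne) this
    have := Fintype.linearIndependent_iff.1 hl c (by rw [← hqs, hq0])
    exact _root_.funext this
  have := _root_.card_le_of_injective R Φ hΦ
  simpa using this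

theorem card_le_hilb (A : Ideal (PS K n)) (d : ℕ) (E : Finset (Fin n →₀ ℕ))
    (hE : ∀ m ∈ E, m.degree = d ∧ m ∈ homLead n A) : E.card ≤ hilb K n A d := by
  classical
  choose! f hfA hfh hf0 hfd using fun m hm => (hE m hm).2
  have hfin : Module.Finite K ↥(homogeneousSubmodule (Fin n) K d) :=
    Module.Finite.iff_fg.2 (homogeneousSubmodule_fg _ _ d)
  have hfin2 : Module.Finite K
      ↥(Submodule.restrictScalars K A ⊓ homogeneousSubmodule (Fin n) K d) :=
    Submodule.finiteDimensional_of_le inf_le_right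
  let F : E → ↥(Submodule.restrictScalars K A ⊓ homogeneousSubmodule (Fin n) K d) := fun e =>
    ⟨f e.1, hfA _ e.2, by
      have := hfh _ e.2
      rwa [(hE _ e.2).1] at this⟩
  have hli : LinearIndependent K F := by
    rw [Fintype.linearIndependent_iff]
    intro c hc
    have hc' : ∑ e : E, c e • f e.1 = 0 := by
      have := congrArg (Submodule.subtype _) hc
      simpa [F] using this
    by_contra! hne
    obtain ⟨e0, he0⟩ := hne
    obtain ⟨e, he, hmax⟩ := Finset.exists_max_image (Finset.univ.filter fun e => c e ≠ 0)
      (fun e : E => MonomialOrder.lex.toSyn e.1) ⟨e0, by simpa using he0⟩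
    have h1 := congrArg (coeff e.1) hc'
    rw [coeff_sum, Finset.sum_eq_single e] at h1
    · rw [coeff_smul, coeff_zero, smul_eq_mul] at h1
      rcases mul_eq_zero.1 h1 with h2 | h2
      · exact (Finset.mem_filter.1 he).2 h2
      · have h3 := MonomialOrder.lex.coeff_degree_ne_zero_iff.2 (hf0 _ e.2)
        rw [hfd _ e.2] at h3
        exact h3 h2
    · intro e' _ hne'
      rw [coeff_smul, smul_eq_mul]
      by_cases hc0 : c e' = 0
      · simp [hc0]
      · rw [MonomialOrder.lex.coeff_eq_zero_of_lt, mul_zero]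
        rw [hfd _ e'.2]
        refine lt_of_le_of_ne (hmax e' (by simpa using hc0)) fun h => hne' ?_
        exact Subtype.ext (MonomialOrder.lex.toSyn.injective h)
    · simp
  have := hli.fintype_card_le_finrank
  simpa [hilb] using this

/-- the generic change of coordinates -/
def genChange : PS K n →ₐ[K] MvPolynomial (Fin n) (MvPolynomial (Fin n × Fin n) K) :=
  MvPolynomial.aeval (fun i => ∑ j, C (X (j, i)) * X j)

/-- specialization -/
def spec (g : GL (Fin n) K) :
    MvPolynomial (Fin n) (MvPolynomial (Fin n × Fin n) K) →+* PS K n :=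
  MvPolynomial.map (MvPolynomial.eval (fun p => (g : Matrix (Fin n) (Fin n) K) p.1 p.2))

theorem spec_genChange (g : GL (Fin n) K) (p : PS K n) :
    spec K n g (genChange K n p) = coordChange K n g p := by
  induction p using MvPolynomial.induction_on with
  | C a =>
    simp only [genChange, coordChange, algHom_C]
    rw [IsScalarTower.algebraMap_apply K (MvPolynomial (Fin n × Fin n) K)]
    simp [spec, algebraMap_eq]
  | add p q hp hq => simp [hp, hq]
  | mul_X p i hp =>
    rw [map_mul, map_mul, hp, map_mul, coordChange_X]
    simp [genChange, spec, smul_eq_C_mul]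

theorem spec_inc (g : GL (Fin n) K) (p : PS K n) :
    spec K n g (MvPolynomial.map C p) = p := by
  rw [spec, MvPolynomial.map_map]
  convert MvPolynomial.map_id p
  ext; simp

theorem genChange_hom (p : PS K n) (d : ℕ) (hp : p.IsHomogeneous d) :
    (genChange K n p).IsHomogeneous d := by
  have := hp.aeval (S := MvPolynomial (Fin n × Fin n) K) (n := 1)
    (fun i => ∑ j, C (X (j, i)) * (X j : MvPolynomial (Fin n) (MvPolynomial (Fin n × Fin n) K))) (by
      intro i
      apply IsHomogeneous.sum
      intro j _
      exact isHomogeneous_C_mul_X _ _)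
  simpa [genChange] using this

/-- the generic product ideal -/
def genProd (I J : Ideal (PS K n)) :
    Ideal (MvPolynomial (Fin n) (MvPolynomial (Fin n × Fin n) K)) :=
  Ideal.span {p | ∃ a ∈ I, ∃ b ∈ J, p = MvPolynomial.map C a * genChange K n b}

theorem spec_mem (I J : Ideal (PS K n)) (g : GL (Fin n) K)
    (f : MvPolynomial (Fin n) (MvPolynomial (Fin n × Fin n) K)) (hf : f ∈ genProd K n I J) :
    spec K n g f ∈ I * Ideal.map (coordChange K n g) J := by
  have : genProd K n I J ≤ Ideal.comap (spec K n g) (I * Ideal.map (coordChange K n g) J) := by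
    rw [genProd, Ideal.span_le]
    rintro _ ⟨a, ha, b, hb, rfl⟩
    simp only [SetLike.mem_coe, Ideal.mem_comap, map_mul, spec_inc, spec_genChange]
    exact Ideal.mul_mem_mul ha (Ideal.mem_map_of_mem _ hb)
  exact this hf

/-- Uniform openness. -/
theorem general_homLead (I J : Ideal (PS K n)) :
    generally K n (fun g =>
      homLead n (genProd K n I J) ⊆ homLead n (I * Ideal.map (coordChange K n g) J)) := by
  classical
  set E := homLead n (genProd K n I J) with hE
  obtain ⟨T, hTE, hT⟩ : ∃ T : Finset (Fin n →₀ ℕ), (∀ t ∈ T, t ∈ E) ∧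
      ∀ m ∈ E, ∃ t ∈ T, t ≤ m := by
    have hfg : (Ideal.span ((fun m => monomial m (1 : K)) '' E)).FG :=
      IsNoetherian.noetherian _
    obtain ⟨s', hs', hss⟩ := (Submodule.fg_span_iff_fg_span_finset_subset _).1 hfg
    obtain ⟨T, hT1, hT2⟩ := Finset.subset_set_image_iff.1 hs'
    refine ⟨T, fun t ht => hT1 ht, fun m hm => ?_⟩
    have hmem : monomial m (1 : K) ∈ Ideal.span ((fun m => monomial m (1 : K)) '' (T : Set _)) := by
      have h1 : monomial m (1 : K) ∈ Ideal.span ((fun m => monomial m (1 : K)) '' E) :=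
        Ideal.subset_span ⟨m, hm, rfl⟩
      have h2 : Ideal.span ((fun m => monomial m (1 : K)) '' E) =
        Ideal.span ((fun m => monomial m (1 : K)) '' (T : Set _)) := by
        rw [← Finset.coe_image, hT2]
        exact hss
      rwa [h2] at h1
    rw [mem_ideal_span_monomial_image] at hmem
    obtain ⟨t, ht, htm⟩ := hmem m (by simp)
    exact ⟨t, ht, htm⟩
  choose! f hfA hfh hf0 hfd using hTE
  refine ⟨∏ t ∈ T, coeff t (f t), ?_, ?_⟩
  · rw [Finset.prod_ne_zero_iff]
    intro t ht
    have := MonomialOrder.lex.coeff_degree_ne_zero_iff.2 (hf0 t ht)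
    rwa [hfd t ht] at this
  · intro g hg m hm
    obtain ⟨t, ht, htm⟩ := hT m hm
    obtain ⟨c, rfl⟩ := exists_add_of_le htm
    rw [map_prod, Finset.prod_ne_zero_iff] at hg
    have hct : coeff t (spec K n g (f t)) ≠ 0 := by
      rw [spec, coeff_map]
      exact hg t ht
    have hne : spec K n g (f t) ≠ 0 := by
      intro h
      rw [h] at hct
      exact hct rfl
    have hdeg : MonomialOrder.lex.degree (spec K n g (f t)) = t := by
      apply MonomialOrder.lex.toSyn.injective
      apply le_antisymm
      · rw [MonomialOrder.degree_le_iff]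
        intro b hb
        have hb' : b ∈ (f t).support := support_map_subset _ _ hb
        have := MonomialOrder.lex.le_degree hb'
        rwa [hfd t ht] at this
      · exact MonomialOrder.lex.le_degree (mem_support_iff.2 hct)
    have hmon : (monomial c (1 : K)) ≠ 0 := by simp
    refine ⟨monomial c 1 * spec K n g (f t), Ideal.mul_mem_left _ _ (spec_mem K n I J g _
      (hfA t ht)), ?_, mul_ne_zero hmon hne, ?_⟩
    · rw [map_add, add_comm]
      exact (isHomogeneous_monomial _ rfl).mul ((hfh t ht).map _)
    · classical
      rw [MonomialOrder.degree_mul hmon hne, hdeg, MonomialOrder.degree_monomial, if_neg one_ne_zero,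
        add_comm]

theorem hilb_span_le (s : Set (Fin n →₀ ℕ)) (d : ℕ) (E : Finset (Fin n →₀ ℕ))
    (hE : ∀ m : Fin n →₀ ℕ, m.degree = d → (∃ t ∈ s, t ≤ m) → m ∈ E) :
    hilb K n (Ideal.span ((fun m => monomial m (1 : K)) '' s)) d ≤ E.card := by
  let Φ : ↥(Submodule.restrictScalars K (Ideal.span ((fun m => monomial m (1 : K)) '' s)) ⊓
      homogeneousSubmodule (Fin n) K d) →ₗ[K] (E → K) :=
    (LinearMap.pi fun e : E => lcoeff K e.1).comp (Submodule.subtype _)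
  have hΦ : Function.Injective Φ := by
    rw [injective_iff_map_eq_zero]
    rintro ⟨q, hq1, hq2⟩ hq
    apply Subtype.ext
    change q = 0
    ext m
    rw [coeff_zero]
    by_contra hne
    have hm : m ∈ E := by
      apply hE
      · by_contra hdd
        exact hne (IsHomogeneous.coeff_eq_zero hq2 hdd)
      · exact mem_ideal_span_monomial_image.1 hq1 m (mem_support_iff.2 hne)
    exact hne (congrFun hq ⟨m, hm⟩)
  have := LinearMap.finrank_le_finrank_of_injective hΦ
  simpa [hilb] using this

open Classical in
theorem hilb_gins_le [Infinite K] (I J : Ideal (PS K n)) (hI : IsHomog K n I) (hJ : IsHomog K n J)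
    (r₁ r₂ : (Fin n →₀ ℕ) → (Fin n →₀ ℕ) → Prop)
    (hr₁ : GoodRel n r₁) (hr₂ : GoodRel n r₂) (h₁ h₂ : GL (Fin n) K) (d : ℕ) :
    hilb K n (initialIdealO K n r₁ (Ideal.map (coordChange K n h₁) I) *
      initialIdealO K n r₂ (Ideal.map (coordChange K n h₂) J)) d ≤
      ((Finset.finsuppAntidiag (Finset.univ : Finset (Fin n)) d).filter
        (· ∈ homLead n (genProd K n I J))).card := by
  set U := leadSet K n r₁ (Ideal.map (coordChange K n h₁) I) with hU
  set V := leadSet K n r₂ (Ideal.map (coordChange K n h₂) J) with hV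
  have hspan : initialIdealO K n r₁ (Ideal.map (coordChange K n h₁) I) *
      initialIdealO K n r₂ (Ideal.map (coordChange K n h₂) J) =
      Ideal.span ((fun m => monomial m (1 : K)) '' {m | ∃ u ∈ U, ∃ v ∈ V, u + v = m}) := by
    rw [initialIdealO_eq, initialIdealO_eq, Ideal.span_mul_span']
    congr 1
    ext p
    rw [Set.mem_mul]
    constructor
    · rintro ⟨_, ⟨u, hu, rfl⟩, _, ⟨v, hv, rfl⟩, rfl⟩
      exact ⟨u + v, ⟨u, hu, v, hv, rfl⟩, by simp [monomial_mul]⟩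
    · rintro ⟨_, ⟨u, hu, v, hv, rfl⟩, rfl⟩
      exact ⟨_, ⟨u, hu, rfl⟩, _, ⟨v, hv, rfl⟩, by simp [monomial_mul]⟩
  rw [hspan]
  set E := (Finset.finsuppAntidiag (Finset.univ : Finset (Fin n)) d).filter
    (fun m => ∃ t ∈ {m | ∃ u ∈ U, ∃ v ∈ V, u + v = m}, t ≤ m) with hE
  refine (hilb_span_le K n _ d E ?_).trans ?_
  · intro m hm ht
    rw [hE, Finset.mem_filter, mem_degFinset]
    exact ⟨hm, ht⟩
  have hex : ∀ e : E, ∃ u v : Fin n →₀ ℕ, ∃ a b : PS K n, u + v = e.1 ∧ a ∈ I ∧ b ∈ J ∧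
      a.IsHomogeneous u.degree ∧ b.IsHomogeneous v.degree ∧
      IsLead K n r₁ (coordChange K n h₁ a) u ∧ IsLead K n r₂ (coordChange K n h₂ b) v := by
    rintro ⟨m, hm⟩
    obtain ⟨_, _, ⟨u, hu, v, hv, rfl⟩, hle⟩ := Finset.mem_filter.1 hm
    obtain ⟨c, rfl⟩ := exists_add_of_le hle
    obtain ⟨a, ha, ha1, ha2⟩ := exists_hom_lead K n r₁ hr₁ I hI h₁ u c hu
    obtain ⟨b, hb, hb1, hb2⟩ := exists_hom_lead K n r₂ hr₂ J hJ h₂ v 0 hv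
    refine ⟨u + c, v + 0, a, b, ?_, ha, hb, ha1, hb1, ha2, hb2⟩
    simp only [add_zero]
    exact add_right_comm _ _ _
  choose u v a b huv ha hb hah hbh hal hbl using hex
  have hdE : ∀ e : E, (e.1).degree = d := fun e =>
    (mem_degFinset n d e.1).1 (Finset.mem_filter.1 e.2).1
  obtain ⟨g, hg⟩ := exists_linInd K n r₁ r₂ hr₁ hr₂ h₁ h₂ d E (fun e => e.1) u v
    Subtype.val_injective huv hdE a b hal hbl
  let P : E → MvPolynomial (Fin n) (MvPolynomial (Fin n × Fin n) K) := fun e =>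
    MvPolynomial.map C (a e) * genChange K n (b e)
  have hP : LinearIndependent (MvPolynomial (Fin n × Fin n) K) P := by
    apply linInd_lift K
      (MvPolynomial.eval (fun p => (g : Matrix (Fin n) (Fin n) K) p.1 p.2)) C (by simp)
    convert hg using 2 with e
    change spec K n g (P e) = _
    simp only [P]
    rw [map_mul, spec_inc, spec_genChange]
  have := card_le_homLead n (genProd K n I J) d P
    (fun e => Ideal.subset_span ⟨a e, ha e, b e, hb e, rfl⟩) (fun e => by
      have h := ((hah e).map (C : K →+* MvPolynomial (Fin n × Fin n) K)).mul
        (genChange_hom K n _ _ (hbh e))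
      rwa [← map_add, huv, hdE] at h) hP
  simpa using this

/-- **Corollary 2.9(ii)** (Caviglia–Murai): for homogeneous ideals `I, J ⊆ S` and a general
change of coordinates `g ∈ GL_n(K)`,
`H(I·g(J), d) ≥ H(Gin_lex(I)·Gin_oplex(J), d)` for all `d ≥ 0`. -/
theorem hilb_general_product_ge_gins [Infinite K]
    (I J : Ideal (PS K n)) (hI : IsHomog K n I) (hJ : IsHomog K n J)
    (GinI : Ideal (PS K n))
    (hGinI : generally K n (fun g =>
      initialIdealO K n (lexLt n) (Ideal.map (coordChange K n g) I) = GinI))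
    (GinJ : Ideal (PS K n))
    (hGinJ : generally K n (fun g =>
      initialIdealO K n (oplexLt n) (Ideal.map (coordChange K n g) J) = GinJ))
 :
    generally K n (fun g => ∀ d : ℕ,
      hilb K n (GinI * GinJ) d ≤ hilb K n (I * Ideal.map (coordChange K n g) J) d) := by
  classical
  obtain ⟨F₁, hF₁, h₁⟩ := hGinI
  obtain ⟨F₂, hF₂, h₂⟩ := hGinJ
  obtain ⟨g₁, hg₁⟩ := exists_GL_eval_ne K n F₁ hF₁
  obtain ⟨g₂, hg₂⟩ := exists_GL_eval_ne K n F₂ hF₂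
  obtain ⟨F, hF, h⟩ := general_homLead K n I J
  refine ⟨F, hF, fun g hg d => ?_⟩
  have hsub := h g hg
  rw [← h₁ g₁ hg₁, ← h₂ g₂ hg₂]
  refine (hilb_gins_le K n I J hI hJ _ _ (goodRel_lex n) (goodRel_oplex n) g₁ g₂ d).trans ?_
  apply card_le_hilb
  intro m hm
  obtain ⟨hm1, hm2⟩ := Finset.mem_filter.1 hm
  exact ⟨(mem_degFinset n d m).1 hm1, hsub hm2⟩

end
end

section
/- Let K be an infinite field and S = K[x_1,...,x_n]. Let I and J be two homogeneous ideals of S. Then for a general change of coordinates g ∈ GL_n(K), the Krull dimension of Tor_i^S(S/I, S/g(J)) is zero for all i > 0. -/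
open MvPolynomial TensorProduct CategoryTheory

noncomputable section

section GF
variable {A : Type} [CommRing A]

/-- Flatness after inverting `F`. -/
def GFlat (F : A) (L : Type) [AddCommGroup L] [Module A L] : Prop :=
  Module.Flat A (LocalizedModule (Submonoid.powers F) L)

lemma GFlat.of_free (F : A) (L : Type) [AddCommGroup L] [Module A L] [Module.Flat A L] :
    GFlat F L := by
  unfold GFlat
  have : Module.Flat (Localization (Submonoid.powers F)) (LocalizedModule (Submonoid.powers F) L) :=
    inferInstance
  exact Module.Flat.trans A (Localization (Submonoid.powers F)) _

lemma GFlat.of_map {F : A} {D L : Type} [AddCommGroup D] [Module A D] [AddCommGroup L] [Module A L]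
    (h : GFlat F D) (f : D →ₗ[A] L) (hf : Function.Injective f)
    (hs : ∀ y, ∃ m : ℕ, F ^ m • y ∈ LinearMap.range f) : GFlat F L := by
  unfold GFlat at *
  let φ := IsLocalizedModule.map (Submonoid.powers F) (LocalizedModule.mkLinearMap (Submonoid.powers F) D)
    (LocalizedModule.mkLinearMap (Submonoid.powers F) L) f
  have h1 : Function.Injective φ := IsLocalizedModule.map_injective _ _ _ _ hf
  have h2 : Function.Surjective φ := by
    intro y
    obtain ⟨⟨y, s⟩, rfl⟩ := IsLocalizedModule.mk'_surjective (Submonoid.powers F)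
      (LocalizedModule.mkLinearMap (Submonoid.powers F) L) y
    obtain ⟨m, d, hd⟩ := hs y
    refine ⟨IsLocalizedModule.mk' (LocalizedModule.mkLinearMap (Submonoid.powers F) D) d
      (⟨F ^ m, m, rfl⟩ * s), ?_⟩
    simp only [φ, IsLocalizedModule.map_mk', hd, Function.uncurry]
    exact IsLocalizedModule.mk'_cancel_left (LocalizedModule.mkLinearMap (Submonoid.powers F) L) y
      (⟨F ^ m, m, rfl⟩ : Submonoid.powers F) s
  exact Module.Flat.of_linearEquiv (LinearEquiv.ofBijective φ ⟨h1, h2⟩).symm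

lemma GFlat.congr {F : A} {D L : Type} [AddCommGroup D] [Module A D] [AddCommGroup L] [Module A L]
    (h : GFlat F D) (f : D ≃ₗ[A] L) : GFlat F L :=
  h.of_map f.toLinearMap f.injective fun y => ⟨0, f.symm y, by simp⟩

lemma flat_of_exact {L' L L'' : Type} [AddCommGroup L'] [Module A L'] [AddCommGroup L] [Module A L]
    [AddCommGroup L''] [Module A L''] [Module.Flat A L] [Module.Flat A L'']
    (f : L' →ₗ[A] L) (g : L →ₗ[A] L'') (hf : Function.Injective f) (hg : Function.Surjective g)
    (H : Function.Exact f g) : Module.Flat A L' := by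
  rw [Module.Flat.iff_rTensor_injective']
  intro I
  have h1 : Function.Injective (f.lTensor I) := LinearMap.lTensor_injective_of_exact_of_flat g hg f hf H _
  have h2 : Function.Injective (I.subtype.rTensor L) :=
    Module.Flat.rTensor_preserves_injective_linearMap _ Subtype.val_injective
  have h3 : f.lTensor A ∘ₗ I.subtype.rTensor L' = I.subtype.rTensor L ∘ₗ f.lTensor I := by
    simp [LinearMap.lTensor_comp_rTensor, LinearMap.rTensor_comp_lTensor]
  have : Function.Injective (f.lTensor A ∘ₗ I.subtype.rTensor L') := by
    rw [h3]; exact h2.comp h1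
  exact Function.Injective.of_comp (f := f.lTensor A) this

lemma mem_smul_top_iff (m : Ideal A) {L : Type} [AddCommGroup L] [Module A L] (v : L) :
    v ∈ m • (⊤ : Submodule A L) ↔ (1 : A ⧸ m) ⊗ₜ[A] v = 0 := by
  rw [← (TensorProduct.quotTensorEquivQuotSMul L m).map_eq_zero_iff]
  have := TensorProduct.quotTensorEquivQuotSMul_mk_tmul (M := L) m 1 v
  rw [map_one, one_smul] at this
  rw [this, Submodule.Quotient.mk_eq_zero]

lemma pure_of_exact {L' L L'' : Type} [AddCommGroup L'] [Module A L'] [AddCommGroup L] [Module A L]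
    [AddCommGroup L''] [Module A L''] [Module.Flat A L'']
    (f : L' →ₗ[A] L) (g : L →ₗ[A] L'') (hf : Function.Injective f) (hg : Function.Surjective g)
    (H : Function.Exact f g) (m : Ideal A) (v : L') (hv : f v ∈ m • (⊤ : Submodule A L)) :
    v ∈ m • (⊤ : Submodule A L') := by
  rw [mem_smul_top_iff] at *
  apply LinearMap.lTensor_injective_of_exact_of_flat g hg f hf H (A ⧸ m)
  simpa using hv

lemma exists_pow_smul_mem (F : A) {L : Type} [AddCommGroup L] [Module A L] (m : Ideal A) (v : L)
    (hv : LocalizedModule.mkLinearMap (Submonoid.powers F) L v ∈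
      m • (⊤ : Submodule A (LocalizedModule (Submonoid.powers F) L))) :
    ∃ N : ℕ, F ^ N • v ∈ m • (⊤ : Submodule A L) := by
  have key : ∀ w ∈ m • (⊤ : Submodule A (LocalizedModule (Submonoid.powers F) L)),
      ∃ N : ℕ, ∃ u ∈ m • (⊤ : Submodule A L),
        F ^ N • w = LocalizedModule.mkLinearMap (Submonoid.powers F) L u := by
    intro w hw
    induction hw using Submodule.smul_induction_on' with
    | smul a ha w _ =>
      obtain ⟨⟨y, s, n, rfl⟩, rfl⟩ := IsLocalizedModule.mk'_surjective (Submonoid.powers F)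
        (LocalizedModule.mkLinearMap (Submonoid.powers F) L) w
      refine ⟨n, a • y, Submodule.smul_mem_smul ha trivial, ?_⟩
      rw [smul_comm, map_smul]
      congr 1
      exact IsLocalizedModule.mk'_cancel' (LocalizedModule.mkLinearMap (Submonoid.powers F) L) y
        (⟨F ^ n, n, rfl⟩ : Submonoid.powers F)
    | add x _ y _ hx hy =>
      obtain ⟨N, u, hu, e⟩ := hx
      obtain ⟨N', u', hu', e'⟩ := hy
      refine ⟨N + N', F ^ N' • u + F ^ N • u', add_mem (Submodule.smul_mem _ _ hu) (Submodule.smul_mem _ _ hu'), ?_⟩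
      rw [map_add, map_smul, map_smul, ← e, ← e', smul_add, smul_smul, smul_smul, pow_add, mul_comm]
  obtain ⟨N, u, hu, e⟩ := key _ hv
  rw [← map_smul, IsLocalizedModule.eq_iff_exists (Submonoid.powers F)] at e
  obtain ⟨⟨_, n, rfl⟩, hc⟩ := e
  refine ⟨n + N, ?_⟩
  rw [pow_add, mul_smul]
  have : F ^ n • F ^ N • v = F ^ n • u := hc
  rw [this]; exact Submodule.smul_mem _ _ hu

lemma locExact (F : A) {L' L L'' : Type} [AddCommGroup L'] [Module A L'] [AddCommGroup L] [Module A L]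
    [AddCommGroup L''] [Module A L'']
    (f : L' →ₗ[A] L) (g : L →ₗ[A] L'') (H : Function.Exact f g) :
    Function.Exact (IsLocalizedModule.map (Submonoid.powers F)
      (LocalizedModule.mkLinearMap (Submonoid.powers F) L')
      (LocalizedModule.mkLinearMap (Submonoid.powers F) L) f)
     (IsLocalizedModule.map (Submonoid.powers F)
      (LocalizedModule.mkLinearMap (Submonoid.powers F) L)
      (LocalizedModule.mkLinearMap (Submonoid.powers F) L'') g) := 
  IsLocalizedModule.map_exact _ _ _ _ f g H

lemma GFlat.of_exact {F : A} {L' L L'' : Type} [AddCommGroup L'] [Module A L'] [AddCommGroup L]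
    [Module A L] [AddCommGroup L''] [Module A L''] (h : GFlat F L) (h'' : GFlat F L'')
    (f : L' →ₗ[A] L) (g : L →ₗ[A] L'') (hf : Function.Injective f) (hg : Function.Surjective g)
    (H : Function.Exact f g) : GFlat F L' := by
  unfold GFlat at *
  exact flat_of_exact _ _ (IsLocalizedModule.map_injective _ _ _ _ hf)
    (IsLocalizedModule.map_surjective _ _ _ _ hg) (locExact F f g H)

lemma GFlat.pure {F : A} {L' L L'' : Type} [AddCommGroup L'] [Module A L'] [AddCommGroup L]
    [Module A L] [AddCommGroup L''] [Module A L''] (h'' : GFlat F L'')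
    (f : L' →ₗ[A] L) (g : L →ₗ[A] L'') (hf : Function.Injective f) (hg : Function.Surjective g)
    (H : Function.Exact f g) (m : Ideal A) (v : L') (hv : f v ∈ m • (⊤ : Submodule A L)) :
    ∃ N : ℕ, F ^ N • v ∈ m • (⊤ : Submodule A L') := by
  unfold GFlat at *
  apply exists_pow_smul_mem
  apply pure_of_exact _ _ (IsLocalizedModule.map_injective _ _ _ _ hf)
    (IsLocalizedModule.map_surjective _ _ _ _ hg) (locExact F f g H)
  rw [IsLocalizedModule.map_apply]
  have : LocalizedModule.mkLinearMap (Submonoid.powers F) L (f v) ∈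
     (m • (⊤ : Submodule A L)).map (LocalizedModule.mkLinearMap (Submonoid.powers F) L) :=
    ⟨_, hv, rfl⟩
  rw [Submodule.map_smul''] at this
  exact Submodule.smul_mono le_rfl le_top this

lemma GFlat.pi {F : A} {L : Type} [AddCommGroup L] [Module A L] (h : GFlat F L) (r : ℕ) :
    GFlat F (Fin r → L) := by
  unfold GFlat at *
  let φ : (Fin r → L) →ₗ[A] (Fin r → LocalizedModule (Submonoid.powers F) L) :=
    LinearMap.pi fun i => LocalizedModule.mkLinearMap (Submonoid.powers F) L ∘ₗ LinearMap.proj i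
  have : IsLocalizedModule (Submonoid.powers F) φ := inferInstance
  have : Module.Flat A (Fin r → LocalizedModule (Submonoid.powers F) L) :=
    Module.Flat.of_linearEquiv
      (DirectSum.linearEquivFunOnFintype A (Fin r) fun _ => LocalizedModule (Submonoid.powers F) L).symm
  exact Module.Flat.of_linearEquiv (IsLocalizedModule.iso (Submonoid.powers F) φ)

/-- Dickson's lemma. -/
lemma dickson {σ : Type} [Finite σ] (T : Set (σ →₀ ℕ)) :
    ∃ t : Finset (σ →₀ ℕ), ↑t ⊆ T ∧ ∀ d ∈ T, ∃ e ∈ t, e ≤ d := by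
  classical
  have h : {x | Minimal (· ∈ T) x}.Finite :=
    WellQuasiOrderedLE.finite_of_isAntichain (setOfPred_minimal_antichain _)
  refine ⟨h.toFinset, fun x hx => ?_, fun d hd => ?_⟩
  · simp at hx; exact hx.1
  · obtain ⟨e, he, hm⟩ := exists_minimal_le_of_wellFoundedLT (· ∈ T) d hd
    exact ⟨e, by simpa using hm, he⟩

lemma genFree [IsDomain A] {k : ℕ} (Q : Ideal (MvPolynomial (Fin k) A)) :
    ∃ F : A, F ≠ 0 ∧ ∀ F', F ∣ F' → GFlat F' (MvPolynomial (Fin k) A ⧸ Q) := by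
  classical
  let mo : MonomialOrder (Fin k) := MonomialOrder.lex
  let T : Set (Fin k →₀ ℕ) := {d | ∃ f ∈ Q, f ≠ 0 ∧ mo.degree f = d}
  obtain ⟨t, htT, ht⟩ := dickson T
  have hch : ∀ e : t, ∃ f ∈ Q, f ≠ 0 ∧ mo.degree f = e := fun e => htT e.2
  choose b hbQ hb0 hbd using hch
  refine ⟨∏ e : t, mo.leadingCoeff (b e), ?_, ?_⟩
  · exact Finset.prod_ne_zero_iff.mpr fun e _ => mo.leadingCoeff_ne_zero_iff.mpr (hb0 e)
  intro F hF
  have hF' : ∀ e : t, mo.leadingCoeff (b e) ∣ F := fun e =>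
    (Finset.dvd_prod_of_mem _ (Finset.mem_univ e)).trans hF
  let D := MvPolynomial.restrictSupport A Tᶜ
  have : Module.Free A D := .of_basis (MvPolynomial.basisRestrictSupport A Tᶜ)
  let q : MvPolynomial (Fin k) A →ₗ[A] MvPolynomial (Fin k) A ⧸ Q := (Ideal.Quotient.mkₐ A Q).toLinearMap
  refine GFlat.of_map (GFlat.of_free F D) (q ∘ₗ D.subtype) ?_ ?_
  · rw [← LinearMap.ker_eq_bot, LinearMap.ker_eq_bot']
    rintro ⟨f, hf⟩ h0
    have hfQ : f ∈ Q := Ideal.Quotient.eq_zero_iff_mem.mp h0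
    by_contra hne
    have hf0 : f ≠ 0 := fun h => hne (Subtype.ext h)
    exact hf (mo.degree_mem_support hf0) ⟨f, hfQ, hf0, rfl⟩
  · let P : MvPolynomial (Fin k) A ⧸ Q → Prop := fun y => ∃ m : ℕ, F ^ m • y ∈ LinearMap.range (q ∘ₗ D.subtype)
    have hadd : ∀ x y, P x → P y → P (x + y) := by
      rintro x y ⟨m, hm⟩ ⟨n, hn⟩
      refine ⟨m + n, ?_⟩
      rw [smul_add]
      refine add_mem ?_ ?_
      · rw [add_comm, pow_add, mul_smul]; exact Submodule.smul_mem _ _ hm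
      · rw [pow_add, mul_smul]; exact Submodule.smul_mem _ _ hn
    have hsmul : ∀ (a : A) x, P x → P (a • x) := by
      rintro a x ⟨m, hm⟩
      exact ⟨m, by rw [smul_comm]; exact Submodule.smul_mem _ _ hm⟩
    have hzero : P 0 := ⟨0, by simp⟩
    have hsum : ∀ f : MvPolynomial (Fin k) A, (∀ d ∈ f.support, P (q (monomial d 1))) → P (q f) := by
      intro f hf
      rw [f.as_sum, map_sum]
      refine Finset.sum_induction _ P hadd hzero fun d hd => ?_
      have : monomial d (coeff d f) = coeff d f • monomial d (1 : A) := by simp [smul_monomial]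
      rw [this, map_smul]
      exact hsmul _ _ (hf d hd)
    have hmon : ∀ s : mo.syn, P (q (monomial (mo.toSyn.symm s) 1)) := by
      intro s
      induction s using WellFoundedLT.induction with
      | _ s ih =>
      set d := mo.toSyn.symm s with hd
      by_cases hT : d ∈ T
      · obtain ⟨e, he, hed⟩ := ht d hT
        have hde : d = (d - e) + e := (tsub_add_cancel_of_le hed).symm
        let f := b ⟨e, he⟩
        let c := mo.leadingCoeff f
        let h : MvPolynomial (Fin k) A := c • monomial d 1 - monomial (d - e) 1 * f
        have hh : P (q h) := by
          refine hsum _ fun d' hd' => ?_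
          have hlt : mo.toSyn d' < s := by
            have hle : mo.toSyn d' ≤ mo.toSyn d := by
              by_contra hgt
              push Not at hgt
              have h1 : coeff d' (c • monomial d (1 : A)) = 0 := by
                have : d ≠ d' := by rintro rfl; exact lt_irrefl _ hgt
                simp [coeff_monomial, this]
              have h2 : coeff d' (monomial (d - e) 1 * f) = 0 := by
                apply mo.coeff_eq_zero_of_lt
                refine lt_of_le_of_lt (mo.degree_mul_le) ?_
                refine lt_of_le_of_lt ?_ hgt
                rw [hde, map_add, map_add]
                rw [hbd ⟨e, he⟩]
                simp only [add_tsub_cancel_right]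
                gcongr
                exact mo.degree_monomial_le _
              rw [mem_support_iff] at hd'
              exact hd' (by simp only [h, coeff_sub, h1, h2, sub_zero])
            have hne : d' ≠ d := by
              intro hdd
              rw [mem_support_iff] at hd'
              apply hd'
              rw [hdd]
              have h2 : coeff d (monomial (d - e) 1 * f) = c := by
                conv_lhs => rw [hde]
                simp only [add_tsub_cancel_right]
                rw [coeff_monomial_mul, one_mul]
                simp only [c, MonomialOrder.leadingCoeff, f, hbd]
              simp [h, h2, coeff_sub]
            have : mo.toSyn d = s := by simp [hd]
            rw [← this]
            exact lt_of_le_of_ne hle (fun h => hne (mo.toSyn.injective h))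
          have := ih _ hlt
          simpa using this
        have hq : q h = c • q (monomial d 1) := by
          rw [map_sub, map_smul]
          have : q (monomial (d - e) 1 * f) = 0 :=
            Ideal.Quotient.eq_zero_iff_mem.mpr (Q.mul_mem_left _ (hbQ _))
          rw [this, sub_zero]
        rw [hq] at hh
        obtain ⟨m, hm⟩ := hh
        obtain ⟨a, ha⟩ := hF' ⟨e, he⟩
        refine ⟨m + 1, ?_⟩
        have : F ^ (m + 1) • q (monomial d 1) = a • F ^ m • c • q (monomial d 1) := by
          rw [smul_smul, smul_smul, pow_succ]
          congr 1
          rw [show F = c * a from ha]; ring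
        rw [this]
        exact Submodule.smul_mem _ _ hm
      · exact ⟨0, ⟨monomial d 1, (monomial_mem_restrictSupport A).mpr (Or.inl hT)⟩, by simp⟩
    intro y
    obtain ⟨f, rfl⟩ := Ideal.Quotient.mk_surjective y
    exact hsum f fun d _ => by simpa using hmon (mo.toSyn d)

lemma genFree_finiteType [IsDomain A] (W : Type) [CommRing W] [Algebra A W] [Algebra.FiniteType A W] :
    ∃ F : A, F ≠ 0 ∧ ∀ F', F ∣ F' → GFlat F' W := by
  obtain ⟨k, f, hf⟩ := Algebra.FiniteType.iff_quotient_mvPolynomial''.mp ‹Algebra.FiniteType A W›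
  obtain ⟨F, h0, h⟩ := genFree (RingHom.ker f)
  exact ⟨F, h0, fun F' hF' => (h F' hF').congr (Ideal.quotientKerAlgEquivOfSurjective hf).toLinearEquiv⟩
end GF
section Step
variable {S A E : Type} [CommRing S] [CommRing A] [CommRing E] [Algebra S E] [Algebra A E]
  [SMulCommClass S A E]

/-- The base change of an `S`-linear map to `E`, as an `A`-linear map. -/
def bc (A E : Type) [CommRing A] [CommRing E] [Algebra S E] [Algebra A E]
    [SMulCommClass S A E] {M N : Type} [AddCommGroup M] [AddCommGroup N] [Module S M] [Module S N]
    (f : M →ₗ[S] N) : (E ⊗[S] M) →ₗ[A] (E ⊗[S] N) :=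
  (AlgebraTensorModule.lTensor E E f).restrictScalars A

lemma bc_coe {M N : Type} [AddCommGroup M] [AddCommGroup N] [Module S M] [Module S N]
    (f : M →ₗ[S] N) : (bc A E f : E ⊗[S] M → E ⊗[S] N) = f.lTensor E := rfl

variable {M' P M : Type} [AddCommGroup M'] [AddCommGroup P] [AddCommGroup M]
  [Module S M'] [Module S P] [Module S M]

lemma map_smul_mem (m : Ideal A) {e : E} (he : e ∈ m.map (algebraMap A E)) (w : E ⊗[S] M) :
    e • w ∈ m • (⊤ : Submodule A (E ⊗[S] M)) := by
  have := Submodule.smul_mem_smul he (Submodule.mem_top (R := E) (x := w))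
  have h2 := Ideal.smul_restrictScalars (R := A) (S := E) m (⊤ : Submodule E (E ⊗[S] M))
  rw [← Submodule.restrictScalars_mem A, h2] at this
  simpa using this

lemma one_tmul_mem (m : Ideal A) (a : Ideal S)
    (ha : ∀ s ∈ a, algebraMap S E s ∈ m.map (algebraMap A E)) (p : P)
    (hp : p ∈ a • (⊤ : Submodule S P)) :
    (1 : E) ⊗ₜ[S] p ∈ m • (⊤ : Submodule A (E ⊗[S] P)) := by
  induction hp using Submodule.smul_induction_on' with
  | smul s hs p _ =>
    have : (1 : E) ⊗ₜ[S] (s • p) = algebraMap S E s • ((1 : E) ⊗ₜ[S] p) := by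
      rw [TensorProduct.tmul_smul, algebraMap_smul]
    rw [this]
    exact map_smul_mem m (ha s hs) _
  | add x _ y _ hx hy => rw [TensorProduct.tmul_add]; exact add_mem hx hy

lemma step_pure [Module.Flat S E] (F : A) (m : Ideal A) (a : Ideal S)
    (ha : ∀ s ∈ a, algebraMap S E s ∈ m.map (algebraMap A E))
    (f : M' →ₗ[S] P) (g : P →ₗ[S] M) (hf : Function.Injective f) (hg : Function.Surjective g)
    (H : Function.Exact f g) (hM : GFlat F (E ⊗[S] M)) (v : M')
    (hv : f v ∈ a • (⊤ : Submodule S P)) :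
    ∃ N : ℕ, F ^ N • ((1 : E) ⊗ₜ[S] v) ∈ m • (⊤ : Submodule A (E ⊗[S] M')) := by
  refine hM.pure (bc A E f) (bc A E g) ?_ ?_ ?_ m _ ?_
  · rw [bc_coe]; exact Module.Flat.lTensor_preserves_injective_linearMap f hf
  · rw [bc_coe]; exact LinearMap.lTensor_surjective E hg
  · rw [bc_coe, bc_coe]; exact lTensor_exact E H hg
  · rw [bc_coe, LinearMap.lTensor_tmul]; exact one_tmul_mem m a ha _ hv

lemma step_gflat [Module.Flat S E] (F : A)
    (f : M' →ₗ[S] P) (g : P →ₗ[S] M) (hf : Function.Injective f) (hg : Function.Surjective g)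
    (H : Function.Exact f g) (hP : GFlat F (E ⊗[S] P)) (hM : GFlat F (E ⊗[S] M)) :
    GFlat F (E ⊗[S] M') := by
  refine hP.of_exact hM (bc A E f) (bc A E g) ?_ ?_ ?_
  · rw [bc_coe]; exact Module.Flat.lTensor_preserves_injective_linearMap f hf
  · rw [bc_coe]; exact LinearMap.lTensor_surjective E hg
  · rw [bc_coe, bc_coe]; exact lTensor_exact E H hg

lemma gflat_free (F : A) (h : GFlat F E) (r : ℕ) : GFlat F (E ⊗[S] (Fin r → S)) := by
  let e : (E ⊗[S] (Fin r → S)) ≃ₗ[E] (Fin r → E) := TensorProduct.piScalarRight S E E (Fin r)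
  exact (h.pi r).congr (e.restrictScalars A).symm

lemma to_Z {Z : Type} [CommRing Z] [Algebra S Z] (ρ : E →ₐ[S] Z) (F : A) (m : Ideal A)
    (hm : ∀ x ∈ m, ρ (algebraMap A E x) = 0) (hF : IsUnit (ρ (algebraMap A E F)))
    (v : M') (N : ℕ)
    (hv : F ^ N • ((1 : E) ⊗ₜ[S] v) ∈ m • (⊤ : Submodule A (E ⊗[S] M'))) :
    (1 : Z) ⊗ₜ[S] v = 0 := by
  let τ := ρ.toLinearMap.rTensor M'
  have hτ : ∀ (e : A) w, τ (e • w) = ρ (algebraMap A E e) • τ w := by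
    intro e w
    induction w using TensorProduct.induction_on with
    | zero => simp
    | add x y hx hy => simp only [smul_add, map_add, hx, hy]
    | tmul x y =>
      simp only [τ, TensorProduct.smul_tmul', LinearMap.rTensor_tmul, AlgHom.toLinearMap_apply,
        Algebra.smul_def e, map_mul, smul_eq_mul]
  have h0 : ∀ w ∈ m • (⊤ : Submodule A (E ⊗[S] M')), τ w = 0 := by
    intro w hw
    induction hw using Submodule.smul_induction_on' with
    | smul s hs p _ => rw [hτ, hm s hs, zero_smul]
    | add x _ y _ hx hy => rw [map_add, hx, hy, add_zero]
  have := h0 _ hv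
  rw [hτ, map_pow, map_pow] at this
  have h2 := ((hF.pow N).smul_eq_zero).mp this
  simpa [τ] using h2

lemma from_Z (x : S) (a : Ideal S) (v : M')
    (hv : (1 : Localization.Away x ⊗[S] (S ⧸ a)) ⊗ₜ[S] v = 0) :
    ∃ N : ℕ, x ^ N • v ∈ a • (⊤ : Submodule S M') := by
  have h1 := congrArg (TensorProduct.assoc S (Localization.Away x) (S ⧸ a) M') hv
  rw [map_zero, Algebra.TensorProduct.one_def, TensorProduct.assoc_tmul] at h1
  have h2 : IsLocalizedModule (Submonoid.powers x)
    (TensorProduct.mk S (Localization.Away x) ((S ⧸ a) ⊗[S] M') 1) :=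
    (isLocalizedModule_iff_isBaseChange (Submonoid.powers x) (Localization.Away x) _).mpr
      (TensorProduct.isBaseChange _ _ _)
  have h3 := (IsLocalizedModule.eq_zero_iff (Submonoid.powers x)
    (TensorProduct.mk S (Localization.Away x) ((S ⧸ a) ⊗[S] M') 1)).mp h1
  obtain ⟨⟨_, N, rfl⟩, hN⟩ := h3
  refine ⟨N, ?_⟩
  rw [mem_smul_top_iff, TensorProduct.tmul_smul]
  exact hN

lemma torsion_bound [Module.Flat S E] (F : A) (m : Ideal A) (a : Ideal S) (x : S)
    (ha : ∀ s ∈ a, algebraMap S E s ∈ m.map (algebraMap A E))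
    (ρ : E →ₐ[S] (Localization.Away x ⊗[S] (S ⧸ a)))
    (hm : ∀ y ∈ m, ρ (algebraMap A E y) = 0) (hF : IsUnit (ρ (algebraMap A E F)))
    [IsNoetherian S M']
    (f : M' →ₗ[S] P) (g : P →ₗ[S] M) (hf : Function.Injective f) (hg : Function.Surjective g)
    (H : Function.Exact f g) (hM : GFlat F (E ⊗[S] M)) :
    ∃ N : ℕ, ∀ v : M', f v ∈ a • (⊤ : Submodule S P) → x ^ N • v ∈ a • (⊤ : Submodule S M') := by
  let U : Submodule S M' := (a • (⊤ : Submodule S P)).comap f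
  have hU : ∀ v ∈ U, ∃ N : ℕ, x ^ N • v ∈ a • (⊤ : Submodule S M') := by
    intro v hv
    obtain ⟨N, hN⟩ := step_pure F m a ha f g hf hg H hM v hv
    exact from_Z x a v (to_Z ρ F m hm hF v N hN)
  obtain ⟨t, ht⟩ : U.FG := IsNoetherian.noetherian U
  have : ∀ v : t, ∃ N : ℕ, x ^ N • (v : M') ∈ a • (⊤ : Submodule S M') := fun v =>
    hU v (ht ▸ Submodule.subset_span v.2)
  choose N hN using this
  refine ⟨∑ v, N v, fun v hv => ?_⟩
  have hv2 : v ∈ U := hv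
  clear hv
  rw [← ht] at hv2
  induction hv2 using Submodule.span_induction with
  | mem y hy =>
    have hle : N ⟨y, hy⟩ ≤ ∑ v, N v := Finset.single_le_sum (f := N) (fun _ _ => Nat.zero_le _) (Finset.mem_univ _)
    rw [← Nat.sub_add_cancel hle, pow_add, mul_smul]
    exact Submodule.smul_mem _ _ (hN ⟨y, hy⟩)
  | zero => simp
  | add y z _ _ hy hz => rw [smul_add]; exact add_mem hy hz
  | smul c y _ hy => rw [smul_comm]; exact Submodule.smul_mem _ _ hy

end Step

section Chase
variable {S : Type} [CommRing S]

lemma chase_step {M' P M : Type} [AddCommGroup M'] [AddCommGroup P] [AddCommGroup M]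
    [Module S M'] [Module S P] [Module S M] {Q2 Q1 Q0 : Type} [AddCommGroup Q2] [AddCommGroup Q1]
    [AddCommGroup Q0] [Module S Q2] [Module S Q1] [Module S Q0] [Module.Flat S P]
    (f : M' →ₗ[S] P) (g : P →ₗ[S] M) (hg : Function.Surjective g)
    (H : Function.Exact f g) (d2 : Q2 →ₗ[S] Q1) (d1 : Q1 →ₗ[S] Q0) (hd : Function.Exact d2 d1)
    (x : S) (h : ∀ w : M' ⊗[S] Q0, (∃ u : P ⊗[S] Q1, f.rTensor Q0 w = d1.lTensor P u) →
      ∃ v, d1.lTensor M' v = x • w)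
    (z : M ⊗[S] Q1) (hz : d1.lTensor M z = 0) : ∃ y, d2.lTensor M y = x • z := by
  obtain ⟨z', rfl⟩ := LinearMap.rTensor_surjective Q1 hg z
  have c1 : ∀ {N N' : Type} [AddCommGroup N] [AddCommGroup N'] [Module S N] [Module S N']
      {R R' : Type} [AddCommGroup R] [AddCommGroup R'] [Module S R] [Module S R']
      (k : N →ₗ[S] N') (l : R →ₗ[S] R') (u : N ⊗[S] R),
      l.lTensor N' (k.rTensor R u) = k.rTensor R' (l.lTensor N u) := by
    intros N N' _ _ _ _ R R' _ _ _ _ k l u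
    rw [← LinearMap.comp_apply, ← LinearMap.comp_apply, LinearMap.lTensor_comp_rTensor,
      LinearMap.rTensor_comp_lTensor]
  rw [c1] at hz
  obtain ⟨w, hw⟩ := (rTensor_exact Q0 H hg _).mp hz
  obtain ⟨v, hv⟩ := h w ⟨z', hw⟩
  have h0 : d1.lTensor P (x • z' - f.rTensor Q1 v) = 0 := by
    rw [map_sub, map_smul, c1, hv, map_smul, hw, sub_self]
  obtain ⟨u, hu⟩ := (Module.Flat.lTensor_exact P hd _).mp h0
  refine ⟨g.rTensor Q2 u, ?_⟩
  rw [c1, hu, map_sub, map_smul]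
  have : g.rTensor Q1 (f.rTensor Q1 v) = 0 := (rTensor_exact Q1 H hg _).mpr ⟨v, rfl⟩
  rw [this, sub_zero]

/-- The abstract inductive statement on Tor being killed by a power of `x`. -/
lemma chase (x : S) (a : Ideal S) (Cl : ∀ (M : Type) [AddCommGroup M] [Module S M], Prop)
    (hCl : ∀ (M : Type) [AddCommGroup M] [Module S M], Cl M →
      ∃ (r : ℕ) (M' : Submodule S (Fin r → S)) (g : (Fin r → S) →ₗ[S] M),
        Function.Surjective g ∧ Function.Exact M'.subtype g ∧ Cl M' ∧
        ∃ N : ℕ, ∀ v : M', (v : Fin r → S) ∈ a • (⊤ : Submodule S (Fin r → S)) →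
          x ^ N • v ∈ a • (⊤ : Submodule S M'))
    (Q : ℕ → Type) [∀ i, AddCommGroup (Q i)] [∀ i, Module S (Q i)] [∀ i, Module.Flat S (Q i)]
    (d : ∀ i, Q (i + 1) →ₗ[S] Q i) (hd : ∀ i, Function.Exact (d (i + 1)) (d i))
    (ε : Q 0 →ₗ[S] (S ⧸ a)) (hε : Function.Surjective ε) (hdε : Function.Exact (d 0) ε)
    (i : ℕ) : ∀ (M : Type) [AddCommGroup M] [Module S M], Cl M →
      ∃ N : ℕ, ∀ z : M ⊗[S] Q (i + 1), (d i).lTensor M z = 0 →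
        ∃ y, (d (i + 1)).lTensor M y = x ^ N • z := by
  induction i with
  | zero =>
    intro M _ _ hM
    obtain ⟨r, M', g, hg, H, -, N, hN⟩ := hCl M hM
    refine ⟨N, fun z hz => chase_step M'.subtype g hg H (d 1) (d 0) (hd 0) _ ?_ z hz⟩
    rintro w ⟨u, hu⟩
    apply (lTensor_exact M' hdε hε _).mp
    let T := ε.lTensor M' w
    obtain ⟨v, hv⟩ : ∃ v : M', v ⊗ₜ[S] (1 : S ⧸ a) = T := by
      have : ∀ T : M' ⊗[S] (S ⧸ a), ∃ v : M', v ⊗ₜ[S] (1 : S ⧸ a) = T := by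
        intro T
        induction T using TensorProduct.induction_on with
        | zero => exact ⟨0, by simp⟩
        | add x y hx hy =>
          obtain ⟨v, rfl⟩ := hx
          obtain ⟨v', rfl⟩ := hy
          exact ⟨v + v', by rw [TensorProduct.add_tmul]⟩
        | tmul p q =>
          obtain ⟨s, rfl⟩ := Ideal.Quotient.mk_surjective q
          refine ⟨s • p, ?_⟩
          rw [TensorProduct.smul_tmul]
          congr 1
          rw [Algebra.smul_def, mul_one]; rfl
      exact this T
    have key : ∀ {N : Type} [AddCommGroup N] [Module S N] (n : N),
        n ∈ a • (⊤ : Submodule S N) ↔ n ⊗ₜ[S] (1 : S ⧸ a) = 0 := by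
      intro N _ _ n
      rw [mem_smul_top_iff, ← (TensorProduct.comm S (S ⧸ a) N).map_eq_zero_iff,
        TensorProduct.comm_tmul]
    have h1 : (v : Fin r → S) ⊗ₜ[S] (1 : S ⧸ a) = 0 := by
      have e1 : M'.subtype.rTensor (S ⧸ a) T = ε.lTensor (Fin r → S) (M'.subtype.rTensor (Q 0) w) := by
        simp only [T]
        rw [← LinearMap.comp_apply, ← LinearMap.comp_apply, LinearMap.lTensor_comp_rTensor,
          LinearMap.rTensor_comp_lTensor]
      rw [hu, (lTensor_exact (Fin r → S) hdε hε _).mpr ⟨u, rfl⟩, ← hv, LinearMap.rTensor_tmul] at e1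
      exact e1
    have h2 := hN v ((key _).mpr h1)
    rw [key, ← TensorProduct.smul_tmul', hv] at h2
    rw [map_smul]; exact h2
  | succ i ih =>
    intro M _ _ hM
    obtain ⟨r, M', g, hg, H, hM', -⟩ := hCl M hM
    obtain ⟨N, hN⟩ := ih M' hM'
    refine ⟨N, fun z hz => chase_step M'.subtype g hg H (d (i + 2)) (d (i + 1)) (hd (i + 1)) _ ?_ z hz⟩
    rintro w ⟨u, hu⟩
    apply hN
    have hinj : Function.Injective (M'.subtype.rTensor (Q i)) :=
      Module.Flat.rTensor_preserves_injective_linearMap _ Subtype.val_injective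
    apply hinj
    have e1 : M'.subtype.rTensor (Q i) ((d i).lTensor M' w)
        = (d i).lTensor (Fin r → S) (M'.subtype.rTensor (Q (i + 1)) w) := by
      rw [← LinearMap.comp_apply, ← LinearMap.comp_apply, LinearMap.lTensor_comp_rTensor,
          LinearMap.rTensor_comp_lTensor]
    rw [e1, hu, map_zero]
    exact (Module.Flat.lTensor_exact (Fin r → S) (hd i) _).mpr ⟨u, rfl⟩

end Chase



section TorConv
variable {S : Type} [CommRing S]

lemma homology_smul_zero (T : ShortComplex (ModuleCat.{0} S)) (r : S)
    (h : ∀ z : T.X₂, T.g z = 0 → ∃ y, T.f y = r • z) (w : T.homology) : r • w = 0 := by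
  have hs : Function.Surjective T.homologyπ := (ModuleCat.epi_iff_surjective _).mp inferInstance
  obtain ⟨c, rfl⟩ := hs w
  have h1 : T.g (T.iCycles c) = 0 := by
    rw [← ModuleCat.comp_apply, ShortComplex.iCycles_g]; rfl
  obtain ⟨y, hy⟩ := h _ h1
  have hi : Function.Injective T.iCycles := (ModuleCat.mono_iff_injective _).mp inferInstance
  have h2 : T.toCycles y = r • c := by
    apply hi
    rw [← ModuleCat.comp_apply, ShortComplex.toCycles_i, map_smul, hy]
  rw [← map_smul, ← h2, ← ModuleCat.comp_apply, ShortComplex.toCycles_comp_homologyπ]; rfl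

lemma tor_smul_zero (x : S) (a : Ideal S) (Cl : ∀ (M : Type) [AddCommGroup M] [Module S M], Prop)
    (hCl : ∀ (M : Type) [AddCommGroup M] [Module S M], Cl M →
      ∃ (r : ℕ) (M' : Submodule S (Fin r → S)) (g : (Fin r → S) →ₗ[S] M),
        Function.Surjective g ∧ Function.Exact M'.subtype g ∧ Cl M' ∧
        ∃ N : ℕ, ∀ v : M', (v : Fin r → S) ∈ a • (⊤ : Submodule S (Fin r → S)) →
          x ^ N • v ∈ a • (⊤ : Submodule S M'))
    (i : ℕ) (M : Type) [AddCommGroup M] [Module S M] (hM : Cl M) :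
    ∃ N : ℕ, x ^ N ∈ Module.annihilator S
      (((Tor (ModuleCat.{0} S) (i + 1)).obj (ModuleCat.of S M)).obj (ModuleCat.of S (S ⧸ a))) := by
  let P := projectiveResolution (ModuleCat.of S (S ⧸ a))
  have hp : ∀ j, Module.Projective S (P.complex.X j) := fun j =>
    (IsProjective.iff_projective (P.complex.X j)).mpr (P.projective j)
  have hfl : ∀ j, Module.Flat S (P.complex.X j) := fun j => inferInstance
  have hsurj : Function.Surjective (P.π.f 0) := (ModuleCat.epi_iff_surjective _).mp inferInstance
  have hd : ∀ j, Function.Exact (P.complex.d (j + 1 + 1) (j + 1)) (P.complex.d (j + 1) j) := fun j =>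
    (ShortComplex.ShortExact.moduleCat_exact_iff_function_exact _).mp (P.exact_succ j)
  have hd0 : Function.Exact (P.complex.d 1 0) (P.π.f 0) :=
    (ShortComplex.ShortExact.moduleCat_exact_iff_function_exact _).mp P.exact₀
  obtain ⟨N, hN⟩ := chase x a Cl hCl (fun j => P.complex.X j)
    (fun j => (P.complex.d (j + 1) j).hom) hd (P.π.f 0).hom hsurj hd0 i M hM
  refine ⟨N, ?_⟩
  let Fn := (MonoidalCategory.tensoringLeft (ModuleCat.{0} S)).obj (ModuleCat.of S M)
  let C := (Fn.mapHomologicalComplex (ComplexShape.down ℕ)).obj P.complex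
  let e1 : ((Tor (ModuleCat.{0} S) (i + 1)).obj (ModuleCat.of S M)).obj (ModuleCat.of S (S ⧸ a)) ≅
    C.homology (i + 1) := P.isoLeftDerivedObj Fn (i + 1)
  let e2 : C.homology (i + 1) ≅ (C.sc' (i + 1 + 1) (i + 1) i).homology :=
    ShortComplex.homologyMapIso (C.isoSc' (i + 1 + 1) (i + 1) i (by simp) (by simp))
  rw [LinearEquiv.annihilator_eq (e1 ≪≫ e2).toLinearEquiv, Module.mem_annihilator]
  exact homology_smul_zero _ _ hN
end TorConv

section FlatE
lemma ideal_map_eq {A B C : Type} [CommRing A] [CommRing B] [CommRing C] (f : A →+* B) (g : B →+* C)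
    (h : A →+* C) (hh : h = g.comp f) (J : Ideal A) : J.map h = (J.map f).map g := by
  rw [Ideal.map_map, hh]

variable {K R : Type} [Field K] [CommRing R] [Algebra K R]

lemma flat_quot_map {σ : Type} (J : Ideal (MvPolynomial σ K)) :
    Module.Flat R (MvPolynomial σ R ⧸ J.map (MvPolynomial.map (σ := σ) (algebraMap K R))) := by
  let e1 := Algebra.TensorProduct.tensorQuotientEquiv (R := K) R (MvPolynomial σ K) R J
  let e2 : ((R ⊗[K] MvPolynomial σ K) ⧸ J.map (Algebra.TensorProduct.includeRight :
        MvPolynomial σ K →ₐ[K] R ⊗[K] MvPolynomial σ K)) ≃ₐ[R]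
      (MvPolynomial σ R ⧸ J.map (MvPolynomial.map (σ := σ) (algebraMap K R))) :=
    Ideal.quotientEquivAlg _ _ (algebraTensorAlgEquiv K R) 
      (ideal_map_eq (Algebra.TensorProduct.includeRight :
        MvPolynomial σ K →ₐ[K] R ⊗[K] MvPolynomial σ K).toRingHom
        (algebraTensorAlgEquiv K R : _ ≃ₐ[R] MvPolynomial σ R).toRingEquiv.toRingHom _
        (by
          ext p : 2
          · simp
          · simp) J)
  exact Module.Flat.of_linearEquiv ((e1.trans e2).symm.toLinearEquiv)

variable {n : ℕ} 

/-- the generic coordinate change -/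
def genMap (y : Fin n → R) : MvPolynomial (Fin n) K →ₐ[K] MvPolynomial (Fin n × Fin n) R :=
  aeval (fun i => ∑ j, X (j, i) * C (y j))

def theta (y : Fin n → R) (k : Fin n) :
    MvPolynomial (Fin n × Fin n) R →ₐ[R] MvPolynomial (Fin n × Fin n) R :=
  aeval (fun p => if p.1 = k then ∑ j, X (j, p.2) * C (y j) else X p)

def theta' (y : Fin n → R) (k : Fin n) (u : R) :
    MvPolynomial (Fin n × Fin n) R →ₐ[R] MvPolynomial (Fin n × Fin n) R :=
  aeval (fun p => if p.1 = k then C u * (X p - ∑ j ∈ Finset.univ.erase k, X (j, p.2) * C (y j)) else X p)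

lemma theta_sum (y : Fin n → R) (k i : Fin n) : ∑ j, (X (j, i) : MvPolynomial (Fin n × Fin n) R) * C (y j)
   = X (k, i) * C (y k) + ∑ j ∈ Finset.univ.erase k, X (j, i) * C (y j) := by
  exact (Finset.add_sum_erase Finset.univ (fun j => X (j, i) * C (y j)) (Finset.mem_univ k)).symm

lemma aeval_C' {σ : Type} (f : MvPolynomial σ R →ₐ[R] MvPolynomial σ R) (r : R) : f (C r) = C r := f.commutes r

def thetaEquiv (y : Fin n → R) (k : Fin n) (u : R) (hu : u * y k = 1) :
    MvPolynomial (Fin n × Fin n) R ≃ₐ[R] MvPolynomial (Fin n × Fin n) R :=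
  have hC : (C u * C (y k) : MvPolynomial (Fin n × Fin n) R) = 1 := by rw [← C_mul, hu, C_1]
  AlgEquiv.ofAlgHom (theta y k) (theta' y k u) (by
    ext1 ⟨a, b⟩
    by_cases h : a = k
    · subst h
      have h1 : ∀ j ∈ Finset.univ.erase a, theta y a (X (j, b)) = X (j, b) := by
        intro j hj; simp [theta, Finset.ne_of_mem_erase hj]
      simp only [AlgHom.comp_apply, theta', aeval_X, if_true, map_mul, map_sub, map_sum, aeval_C']
      rw [Finset.sum_congr rfl (fun j hj => by rw [h1 j hj])]
      simp only [theta, aeval_X, if_true]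
      rw [theta_sum y a b]
      simp only [AlgHom.id_apply]
      linear_combination X (a, b) * hC
    · simp [theta, theta', h]) (by
    ext1 ⟨a, b⟩
    by_cases h : a = k
    · subst h
      have h1 : ∀ j ∈ Finset.univ.erase a, theta' y a u (X (j, b)) = X (j, b) := by
        intro j hj; simp [theta', Finset.ne_of_mem_erase hj]
      simp only [AlgHom.comp_apply, theta, aeval_X, if_true]
      rw [theta_sum y a b]
      simp only [map_add, map_mul, map_sum, aeval_C']
      rw [Finset.sum_congr rfl (fun j hj => by rw [h1 j hj])]
      simp only [theta', aeval_X, if_true, AlgHom.id_apply]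
      linear_combination (X (a, b) - ∑ j ∈ Finset.univ.erase a, X (j, b) * C (y j)) * hC
    · simp [theta, theta', h])

lemma flat_genMap (y : Fin n → R) (k : Fin n) (hk : IsUnit (y k)) (J : Ideal (MvPolynomial (Fin n) K)) :
    Module.Flat R (MvPolynomial (Fin n × Fin n) R ⧸ J.map (genMap y)) := by
  obtain ⟨u, hu⟩ := hk.exists_left_inv
  let J0 : Ideal (MvPolynomial (Fin n × Fin n) K) := J.map (rename (R := K) (fun i : Fin n => (k, i)))
  have := flat_quot_map (R := R) J0
  let e : (MvPolynomial (Fin n × Fin n) R ⧸ J0.map (MvPolynomial.map (σ := Fin n × Fin n) (algebraMap K R))) ≃ₐ[R]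
    (MvPolynomial (Fin n × Fin n) R ⧸ J.map (genMap y)) :=
    Ideal.quotientEquivAlg _ _ (thetaEquiv y k u hu) (by
      have h1 := ideal_map_eq (rename (R := K) (fun i : Fin n => (k, i))).toRingHom
        (MvPolynomial.map (σ := Fin n × Fin n) (algebraMap K R)) _ rfl J
      have h2 := ideal_map_eq
        ((MvPolynomial.map (σ := Fin n × Fin n) (algebraMap K R)).comp
          (rename (R := K) (fun i : Fin n => (k, i))).toRingHom)
        (thetaEquiv y k u hu).toRingEquiv.toRingHom (genMap y).toRingHom (by
          ext p : 2
          · simp only [genMap, AlgHom.toRingHom_eq_coe, RingHom.comp_apply, RingHom.coe_coe, rename_C,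
              map_C, aeval_C]
            exact ((thetaEquiv y k u hu).commutes _).symm
          · simp [genMap, thetaEquiv, theta]) J
      rw [h1] at h2
      exact h2)
  exact Module.Flat.of_linearEquiv e.symm.toLinearEquiv
end FlatE
section Local

lemma ft_tensor {S A E : Type} [CommRing S] [CommRing A] [CommRing E] [Algebra S E] [Algebra A E]
    [SMulCommClass S A E] [Algebra.FiniteType A E] (I : Ideal S) :
    Algebra.FiniteType A (E ⊗[S] (S ⧸ I)) :=
  Algebra.FiniteType.trans (S := E) inferInstance inferInstance

variable (K : Type) [Field K] (n : ℕ) (J : Ideal (MvPolynomial (Fin n) K)) (k : Fin n)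

abbrev Sk : Type := Localization.Away (X k : MvPolynomial (Fin n) K)
abbrev yk (j : Fin n) : Sk K n k := algebraMap (MvPolynomial (Fin n) K) (Sk K n k) (X j)
abbrev Bk : Type := MvPolynomial (Fin n × Fin n) (Sk K n k)
abbrev Jk : Ideal (Bk K n k) := J.map (genMap (K := K) (yk K n k))

def Ek : Type := Bk K n k ⧸ Jk K n J k

instance : CommRing (Ek K n J k) := inferInstanceAs (CommRing (Bk K n k ⧸ Jk K n J k))
instance : Algebra (Sk K n k) (Ek K n J k) :=
  inferInstanceAs (Algebra (Sk K n k) (Bk K n k ⧸ Jk K n J k))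
instance : Algebra (Bk K n k) (Ek K n J k) :=
  inferInstanceAs (Algebra (Bk K n k) (Bk K n k ⧸ Jk K n J k))
instance : Algebra (MvPolynomial (Fin n) K) (Ek K n J k) :=
  inferInstanceAs (Algebra (MvPolynomial (Fin n) K) (Bk K n k ⧸ Jk K n J k))
instance : Algebra K (Ek K n J k) :=
  inferInstanceAs (Algebra K (Bk K n k ⧸ Jk K n J k))
instance algAE : Algebra (MvPolynomial (Fin n × Fin n) K) (Ek K n J k) :=
  ((Ideal.Quotient.mk (Jk K n J k)).comp (MvPolynomial.map (algebraMap K (Sk K n k)))).toAlgebra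

instance : IsScalarTower (MvPolynomial (Fin n) K) (Sk K n k) (Ek K n J k) :=
  IsScalarTower.of_algebraMap_eq (fun _ => rfl)
instance : IsScalarTower (MvPolynomial (Fin n) K) (Bk K n k) (Ek K n J k) :=
  IsScalarTower.of_algebraMap_eq (fun _ => rfl)
instance : IsScalarTower K (Bk K n k) (Ek K n J k) :=
  IsScalarTower.of_algebraMap_eq (fun _ => rfl)
instance : IsScalarTower K (MvPolynomial (Fin n) K) (Ek K n J k) :=
  IsScalarTower.of_algebraMap_eq (fun _ => rfl)
lemma algAE_apply (p : MvPolynomial (Fin n × Fin n) K) :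
    algebraMap (MvPolynomial (Fin n × Fin n) K) (Ek K n J k) p =
      Ideal.Quotient.mk (Jk K n J k) (MvPolynomial.map (algebraMap K (Sk K n k)) p) := rfl
lemma algSE_apply (p : MvPolynomial (Fin n) K) :
    algebraMap (MvPolynomial (Fin n) K) (Ek K n J k) p =
      Ideal.Quotient.mk (Jk K n J k) (C (algebraMap _ (Sk K n k) p)) := rfl
instance : IsScalarTower K (MvPolynomial (Fin n × Fin n) K) (Ek K n J k) :=
  IsScalarTower.of_algebraMap_eq (fun x => by
    rw [algAE_apply, MvPolynomial.algebraMap_eq, map_C]; rfl)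
instance : SMulCommClass (MvPolynomial (Fin n) K) (MvPolynomial (Fin n × Fin n) K) (Ek K n J k) :=
  ⟨fun s a e => by rw [Algebra.smul_def, Algebra.smul_def, Algebra.smul_def, Algebra.smul_def, mul_left_comm]⟩

instance flatE : Module.Flat (MvPolynomial (Fin n) K) (Ek K n J k) := by
  have h1 : Module.Flat (Sk K n k) (Ek K n J k) := 
    flat_genMap (yk K n k) k (IsLocalization.Away.algebraMap_isUnit _) J
  have h2 : Module.Flat (MvPolynomial (Fin n) K) (Sk K n k) := IsLocalization.flat _ (Submonoid.powers (X k))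
  exact Module.Flat.trans (MvPolynomial (Fin n) K) (Sk K n k) (Ek K n J k)

instance ftE : Algebra.FiniteType (MvPolynomial (Fin n × Fin n) K) (Ek K n J k) := by
  have h0 : Algebra.FiniteType (MvPolynomial (Fin n) K) (Sk K n k) := 
    IsLocalization.finiteType_of_monoid_fg (Submonoid.powers (X k)) (Sk K n k)
  have h1 : Algebra.FiniteType (MvPolynomial (Fin n) K) (Bk K n k) := Algebra.FiniteType.trans (S := Sk K n k) h0 inferInstance
  have h3 : Algebra.FiniteType (MvPolynomial (Fin n) K) (Ek K n J k) := 
    h1.of_surjective (Ideal.Quotient.mkₐ (MvPolynomial (Fin n) K) (Jk K n J k)) Ideal.Quotient.mk_surjective 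
  have h4 : Algebra.FiniteType K (Ek K n J k) := 
    Algebra.FiniteType.trans (S := MvPolynomial (Fin n) K) inferInstance h3
  exact Algebra.FiniteType.of_restrictScalars_finiteType K _ _

instance ftEI (I : Ideal (MvPolynomial (Fin n) K)) : Algebra.FiniteType (MvPolynomial (Fin n × Fin n) K)
   (Ek K n J k ⊗[MvPolynomial (Fin n) K] (MvPolynomial (Fin n) K ⧸ I)) := by
  exact ft_tensor I
end Local


section Fin
lemma algebraMap_tensor_zero {S T : Type} [CommRing S] [CommRing T] [Algebra S T] (a : Ideal S) :
    ∀ s ∈ a, algebraMap S (T ⊗[S] (S ⧸ a)) s = 0 := by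
  intro s hs
  rw [← (Algebra.TensorProduct.includeRight : (S ⧸ a) →ₐ[S] T ⊗[S] (S ⧸ a)).commutes s]
  have : algebraMap S (S ⧸ a) s = 0 := Ideal.Quotient.eq_zero_iff_mem.mpr hs
  rw [this, map_zero]

lemma krullDim_quot_le_zero {K : Type} [Field K] {n : ℕ} (a : Ideal (MvPolynomial (Fin n) K))
    (h : ∀ k, ∃ N : ℕ, (X k : MvPolynomial (Fin n) K) ^ N ∈ a) :
    ringKrullDim (MvPolynomial (Fin n) K ⧸ a) ≤ 0 := by
  suffices Ring.KrullDimLE 0 (MvPolynomial (Fin n) K ⧸ a) by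
    have h0 := (Ring.krullDimLE_iff (n := 0) (R := MvPolynomial (Fin n) K ⧸ a)).mp this
    simpa using h0
  rw [Ring.krullDimLE_zero_iff]
  intro p hp
  let π := Ideal.Quotient.mk a
  have hX : ∀ k, π (X k) ∈ p := by
    intro k
    obtain ⟨N, hN⟩ := h k
    apply hp.mem_of_pow_mem N
    rw [← map_pow, Ideal.Quotient.eq_zero_iff_mem.mpr hN]
    exact p.zero_mem
  have hsub : ∀ f : MvPolynomial (Fin n) K, π f - π (C (eval 0 f)) ∈ p := by
    intro f
    induction f using MvPolynomial.induction_on with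
    | C c => simp
    | add f g hf hg =>
      have : π (f + g) - π (C (eval 0 (f + g))) =
          (π f - π (C (eval 0 f))) + (π g - π (C (eval 0 g))) := by
        simp only [map_add]; ring
      rw [this]; exact p.add_mem hf hg
    | mul_X f i hf =>
      have : π (f * X i) - π (C (eval 0 (f * X i))) = π f * π (X i) := by simp
      rw [this]; exact p.mul_mem_left _ (hX i)
  refine ⟨⟨hp.ne_top, fun q hq => ?_⟩⟩
  obtain ⟨y, hyq, hyp⟩ := SetLike.exists_of_lt hq
  obtain ⟨f, rfl⟩ := Ideal.Quotient.mk_surjective y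
  have h1 : π (C (eval 0 f)) ∈ q := by
    have : π f - (π f - π (C (eval 0 f))) ∈ q := q.sub_mem hyq (hq.le (hsub f))
    rwa [sub_sub_cancel] at this
  have h2 : eval 0 f ≠ 0 := by
    intro h0
    have := hsub f
    rw [h0, C_0, map_zero, sub_zero] at this
    exact hyp this
  exact Ideal.eq_top_of_isUnit_mem _ h1 (((IsUnit.mk0 _ h2).map C).map π)
variable (K : Type) [Field K] (n : ℕ) (J : Ideal (MvPolynomial (Fin n) K)) (k : Fin n)
  (g : Matrix (Fin n) (Fin n) K)

def cc : MvPolynomial (Fin n) K →ₐ[K] MvPolynomial (Fin n) K :=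
  aeval (fun i => ∑ j, (g j i) • X j)

def evg : MvPolynomial (Fin n × Fin n) K →+* K :=
  eval (fun p => g p.1 p.2)

lemma ha_aux (s : MvPolynomial (Fin n) K) (hs : s ∈ J.map (cc K n g)) :
    algebraMap _ (Ek K n J k) s ∈
      (RingHom.ker (evg K n g)).map (algebraMap (MvPolynomial (Fin n × Fin n) K) (Ek K n J k)) := by
  let mE : Ideal (Ek K n J k) :=
    (RingHom.ker (evg K n g)).map (algebraMap (MvPolynomial (Fin n × Fin n) K) (Ek K n J k))
  let mkE : Bk K n k →+* Ek K n J k := Ideal.Quotient.mk (Jk K n J k)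
  let f1 : MvPolynomial (Fin n) K →+* Ek K n J k ⧸ mE := (Ideal.Quotient.mk mE).comp
    ((algebraMap (MvPolynomial (Fin n) K) (Ek K n J k)).comp (cc K n g).toRingHom)
  let f2 : MvPolynomial (Fin n) K →+* Ek K n J k ⧸ mE := (Ideal.Quotient.mk mE).comp
    (mkE.comp (genMap (K := K) (yk K n k)).toRingHom)
  have hX : ∀ p, Ideal.Quotient.mk mE (mkE (X p)) = Ideal.Quotient.mk mE
      (algebraMap (MvPolynomial (Fin n) K) (Ek K n J k) (C (g p.1 p.2))) := by
    intro p
    have e1 : mkE (X p) = algebraMap (MvPolynomial (Fin n × Fin n) K) (Ek K n J k) (X p) := by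
      rw [algAE_apply, map_X]; rfl
    have e2 : algebraMap (MvPolynomial (Fin n) K) (Ek K n J k) (C (g p.1 p.2)) =
        algebraMap (MvPolynomial (Fin n × Fin n) K) (Ek K n J k) (C (g p.1 p.2)) := by
      rw [algAE_apply, map_C, algSE_apply]; rfl
    rw [Ideal.Quotient.eq, e1, e2, ← map_sub]
    apply Ideal.mem_map_of_mem
    rw [RingHom.mem_ker]
    simp [evg]
  have hf : f1 = f2 := by
    apply MvPolynomial.ringHom_ext
    · intro c
      have h1 : cc K n g (C c) = C c := (cc K n g).commutes c
      have h2 : genMap (K := K) (yk K n k) (C c) = C (algebraMap K _ c) :=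
        (genMap (K := K) (yk K n k)).commutes c
      change Ideal.Quotient.mk mE (algebraMap (MvPolynomial (Fin n) K) (Ek K n J k) (cc K n g (C c))) =
        Ideal.Quotient.mk mE (mkE (genMap (K := K) (yk K n k) (C c)))
      rw [h1, h2, algSE_apply]; rfl
    · intro i
      change Ideal.Quotient.mk mE (algebraMap (MvPolynomial (Fin n) K) (Ek K n J k) (cc K n g (X i))) =
        Ideal.Quotient.mk mE (mkE (genMap (K := K) (yk K n k) (X i)))
      rw [cc, genMap, aeval_X, aeval_X]
      simp only [map_sum, map_mul, smul_eq_C_mul]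
      refine Finset.sum_congr rfl (fun j _ => ?_)
      rw [hX]; rfl
  have : J.map (cc K n g) ≤ Ideal.comap (algebraMap (MvPolynomial (Fin n) K) (Ek K n J k)) mE := by
    rw [Ideal.map_le_iff_le_comap]
    intro h hh
    have h3 : f1 h = f2 h := by rw [hf]
    have h4 : mkE (genMap (K := K) (yk K n k) h) = 0 :=
      Ideal.Quotient.eq_zero_iff_mem.mpr (Ideal.mem_map_of_mem _ hh)
    have h5 : f2 h = 0 := by
      change Ideal.Quotient.mk mE (mkE (genMap (K := K) (yk K n k) h)) = 0
      rw [h4, map_zero]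
    rw [h5] at h3
    exact (Ideal.Quotient.eq_zero_iff_mem (I := mE)).mp h3
  exact this hs

lemma rho_aux (Z : Type) [CommRing Z] [Algebra (MvPolynomial (Fin n) K) Z] [Algebra (Sk K n k) Z]
    [IsScalarTower (MvPolynomial (Fin n) K) (Sk K n k) Z]
    (hZ : ∀ s ∈ J.map (cc K n g), algebraMap (MvPolynomial (Fin n) K) Z s = 0) :
    ∃ ρ : Ek K n J k →ₐ[MvPolynomial (Fin n) K] Z, ∀ p : MvPolynomial (Fin n × Fin n) K,
      ρ (algebraMap _ _ p) = algebraMap (MvPolynomial (Fin n) K) Z (C (evg K n g p)) := by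
  let f0 : Bk K n k →ₐ[Sk K n k] Z :=
    aeval (fun p => algebraMap (MvPolynomial (Fin n) K) Z (C (g p.1 p.2)))
  have hC : ∀ r, f0 (C r) = algebraMap (Sk K n k) Z r := fun r => f0.commutes r
  have hX : ∀ p, f0 (X p) = algebraMap (MvPolynomial (Fin n) K) Z (C (g p.1 p.2)) :=
    fun p => aeval_X _ p
  have hSS : ∀ r, algebraMap (Sk K n k) Z (algebraMap (MvPolynomial (Fin n) K) (Sk K n k) r) = 
      algebraMap (MvPolynomial (Fin n) K) Z r := fun r => 
      (IsScalarTower.algebraMap_apply (MvPolynomial (Fin n) K) (Sk K n k) Z r).symm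
  have hK : ∀ c : K, algebraMap K (Sk K n k) c = algebraMap (MvPolynomial (Fin n) K) (Sk K n k) (C c) :=
    fun c => rfl
  have h1 : (f0 : Bk K n k →+* Z).comp (genMap (K := K) (yk K n k)).toRingHom =
      (algebraMap (MvPolynomial (Fin n) K) Z).comp (cc K n g).toRingHom := by
    apply MvPolynomial.ringHom_ext
    · intro c
      have h1 : cc K n g (C c) = C c := (cc K n g).commutes c
      have h2 : genMap (K := K) (yk K n k) (C c) = C (algebraMap K _ c) :=
        (genMap (K := K) (yk K n k)).commutes c
      change f0 (genMap (K := K) (yk K n k) (C c)) = algebraMap _ Z (cc K n g (C c))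
      rw [h1, h2, hC, hK, hSS]
    · intro i
      change f0 (genMap (K := K) (yk K n k) (X i)) = algebraMap _ Z (cc K n g (X i))
      rw [cc, genMap, aeval_X, aeval_X]
      simp only [map_sum, map_mul, smul_eq_C_mul]
      refine Finset.sum_congr rfl (fun j _ => ?_)
      rw [hX, hC, hSS]
  have h2 : ∀ b ∈ Jk K n J k, f0 b = 0 := by
    have : Jk K n J k ≤ Ideal.comap f0 ⊥ := by
      rw [Ideal.map_le_iff_le_comap]
      intro h hh
      have := RingHom.congr_fun h1 h
      change f0 (genMap (K := K) (yk K n k) h) = algebraMap _ Z (cc K n g h) at this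
      change f0 (genMap (K := K) (yk K n k) h) = 0
      rw [this]
      exact hZ _ (Ideal.mem_map_of_mem _ hh)
    exact fun b hb => this hb
  let ρ0 : Ek K n J k →+* Z := Ideal.Quotient.lift (Jk K n J k) (f0 : Bk K n k →+* Z) h2
  refine ⟨{ ρ0 with commutes' := ?_ }, ?_⟩
  · intro r
    change f0 (C (algebraMap _ (Sk K n k) r)) = _
    rw [hC, hSS]
  · intro p
    change f0 (MvPolynomial.map (algebraMap K (Sk K n k)) p) = _
    have : (f0 : Bk K n k →+* Z).comp (MvPolynomial.map (algebraMap K (Sk K n k))) =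
      (algebraMap (MvPolynomial (Fin n) K) Z).comp ((C : K →+* MvPolynomial (Fin n) K).comp (evg K n g)) := by
      apply MvPolynomial.ringHom_ext
      · intro c
        change f0 (MvPolynomial.map (algebraMap K (Sk K n k)) (C c)) = algebraMap _ Z (C (evg K n g (C c)))
        rw [map_C, hC, hK, hSS, evg, eval_C]
      · intro c
        change f0 (MvPolynomial.map (algebraMap K (Sk K n k)) (X c)) = algebraMap _ Z (C (evg K n g (X c)))
        rw [map_X, hX, evg, eval_X]
    exact RingHom.congr_fun this p

lemma local_main (I : Ideal (MvPolynomial (Fin n) K)) : ∃ F : MvPolynomial (Fin n × Fin n) K, F ≠ 0 ∧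
    ∀ F', F ∣ F' → ∀ g : Matrix (Fin n) (Fin n) K, evg K n g F' ≠ 0 → ∀ i : ℕ, ∃ N : ℕ,
      (X k : MvPolynomial (Fin n) K) ^ N ∈ Module.annihilator (MvPolynomial (Fin n) K)
      (((Tor (ModuleCat.{0} (MvPolynomial (Fin n) K)) (i + 1)).obj
        (ModuleCat.of _ (MvPolynomial (Fin n) K ⧸ I))).obj
          (ModuleCat.of _ (MvPolynomial (Fin n) K ⧸ J.map (cc K n g)))) := by
  obtain ⟨F1, hF1, H1⟩ := genFree_finiteType (A := MvPolynomial (Fin n × Fin n) K) (Ek K n J k)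
  obtain ⟨F2, hF2, H2⟩ := genFree_finiteType (A := MvPolynomial (Fin n × Fin n) K)
    (Ek K n J k ⊗[MvPolynomial (Fin n) K] (MvPolynomial (Fin n) K ⧸ I))
  refine ⟨F1 * F2, mul_ne_zero hF1 hF2, fun F hF g hg i => ?_⟩
  have hE : GFlat F (Ek K n J k) := H1 F ((dvd_mul_right _ _).trans hF)
  have hEI : GFlat F (Ek K n J k ⊗[MvPolynomial (Fin n) K] (MvPolynomial (Fin n) K ⧸ I)) :=
    H2 F ((dvd_mul_left _ _).trans hF)
  let S := MvPolynomial (Fin n) K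
  let a : Ideal S := J.map (cc K n g)
  obtain ⟨ρ, hρ⟩ := rho_aux K n J k g (Sk K n k ⊗[S] (S ⧸ a)) (algebraMap_tensor_zero a)
  refine tor_smul_zero (S := S) (X k) a
    (fun M _ _ => Module.Finite S M ∧ GFlat F (Ek K n J k ⊗[S] M)) ?_ i (S ⧸ I) ⟨inferInstance, hEI⟩
  rintro M _ _ ⟨hfin, hM⟩
  obtain ⟨r, p, hp⟩ := Module.Finite.exists_fin' S M
  have hex : Function.Exact (LinearMap.ker p).subtype p := LinearMap.exact_subtype_ker_map p
  refine ⟨r, LinearMap.ker p, p, hp, hex, ⟨inferInstance, ?_⟩, ?_⟩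
  · exact step_gflat F _ p Subtype.val_injective hp hex (gflat_free F hE r) hM
  · refine torsion_bound F (RingHom.ker (evg K n g)) a (X k) (ha_aux K n J k g) ρ ?_ ?_
      (LinearMap.ker p).subtype p Subtype.val_injective hp hex hM
    · intro y hy
      rw [hρ, (RingHom.mem_ker).mp hy, map_zero, map_zero]
    · rw [hρ]
      exact ((IsUnit.mk0 _ hg).map C).map _

end Fin


variable (K : Type) [Field K] (n : ℕ)

/-- **Proposition 2.10** (Miller–Speyer; Caviglia–Murai): for homogeneous ideals
`I, J ⊆ S` and a general change of coordinates `g ∈ GL_n(K)`, the Krull dimension of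
`Tor_i(S/I, S/g(J))` (i.e. the Krull dimension of `S/Ann(Tor_i(S/I, S/g(J)))`) is zero
for all `i > 0`. -/
theorem krullDim_tor_general_eq_zero [Infinite K]
    (I J : Ideal (PS K n)) (hI : IsHomog K n I) (hJ : IsHomog K n J) :
    generally K n (fun g => ∀ i : ℕ, 0 < i →
      ringKrullDim (PS K n ⧸ Module.annihilator (PS K n)
        (((Tor (ModuleCat (PS K n)) i).obj (ModuleCat.of (PS K n) (PS K n ⧸ I))).obj
          (ModuleCat.of (PS K n) (PS K n ⧸ Ideal.map (coordChange K n g) J)))) ≤ 0) := by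
  choose F hF H using fun k => local_main K n J k I
  refine ⟨∏ k, F k, Finset.prod_ne_zero_iff.mpr (fun k _ => hF k), fun g hg i hi => ?_⟩
  obtain ⟨i, rfl⟩ := Nat.exists_eq_succ_of_ne_zero hi.ne'
  apply krullDim_quot_le_zero
  intro k
  exact H k (∏ k, F k) (Finset.dvd_prod_of_mem F (Finset.mem_univ k)) (g : Matrix (Fin n) (Fin n) K) hg i

end
end

section
/- Let K be an infinite field and S = K[x_1,...,x_n]. If I is a Borel-fixed ideal of S (fixed by all upper triangular invertible matrices), J is an opposite Borel-fixed ideal of S (its image under the coordinate reversal x_i ↦ x_{n-i+1} is Borel-fixed), and i > 0, then the Krull dimension of Tor_i^S(S/I, S/J) is zero. -/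
open MvPolynomial TensorProduct CategoryTheory

noncomputable section

variable (K : Type) [Field K] (n : ℕ)

/-- `I` is Borel-fixed: `b(I) = I` for every upper triangular invertible matrix `b`. -/
def IsBorelFixed (I : Ideal (PS K n)) : Prop :=
  ∀ b : GL (Fin n) K, (∀ i j : Fin n, j < i → (b : Matrix (Fin n) (Fin n) K) i j = 0) →
    Ideal.map (coordChange K n b) I = I

/-- The coordinate reversal `op : x_i ↦ x_{n-i+1}`. -/
def opMap : PS K n →ₐ[K] PS K n :=
  MvPolynomial.aeval (fun i => MvPolynomial.X i.rev)

section TorVanish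

variable (C S : Type) [CommRing C] [CommRing S] [Algebra C S]

def bcF : ModuleCat.{0} C ⥤ ModuleCat.{0} S where
  obj M := ModuleCat.of S (S ⊗[C] M)
  map l := ModuleCat.ofHom (l.hom.baseChange S)
  map_id M := by ext : 1; simp
  map_comp f g := by ext : 1; simp [LinearMap.baseChange_comp]

instance : (bcF C S).Additive where
  map_add {M N f g} := by
    ext : 1
    simp only [bcF, ModuleCat.hom_add, LinearMap.baseChange_add]
    rfl

instance : (bcF C S).PreservesProjectiveObjects where
  projective_obj {M} hM := by
    have : Module.Projective C M := (IsProjective.iff_projective _).2 hM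
    exact (IsProjective.iff_projective (R := S) (S ⊗[C] M)).1 inferInstance

lemma bcF_exact [Module.Flat C S] : (bcF C S).PreservesHomology := by
  refine ((Functor.exact_tfae (bcF C S)).out 1 2).1 ?_
  intro T hT
  rw [ShortComplex.ShortExact.moduleCat_exact_iff_function_exact] at hT ⊢
  exact Module.Flat.lTensor_exact (R := C) S hT

variable (X : Type) [AddCommGroup X] [Module S X] [Module C X] [IsScalarTower C S X]

lemma tens_exact [Module.Flat C X] (T : ShortComplex (ModuleCat.{0} C)) (hT : T.Exact) :
    ((T.map (bcF C S)).map ((MonoidalCategory.tensoringLeft (ModuleCat.{0} S)).obj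
      (ModuleCat.of S X))).Exact := by
  rw [ShortComplex.ShortExact.moduleCat_exact_iff_function_exact] at hT ⊢
  have h := Module.Flat.lTensor_exact (R := C) X hT
  refine (Function.Exact.iff_of_ladder_linearEquiv
    (e₁ := (TensorProduct.AlgebraTensorModule.cancelBaseChange C S S X T.X₁).restrictScalars C)
    (e₂ := (TensorProduct.AlgebraTensorModule.cancelBaseChange C S S X T.X₂).restrictScalars C)
    (e₃ := (TensorProduct.AlgebraTensorModule.cancelBaseChange C S S X T.X₃).restrictScalars C)
    (f₁₂ := ((T.f.hom.baseChange S).lTensor X).restrictScalars C)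
    (f₂₃ := ((T.g.hom.baseChange S).lTensor X).restrictScalars C)
    (g₁₂ := T.f.hom.lTensor X) (g₂₃ := T.g.hom.lTensor X) ?_ ?_).1 h
  · apply LinearMap.ext; intro x
    induction x using TensorProduct.induction_on with
    | zero => simp
    | add a b ha hb => simp only [map_add, ha, hb]
    | tmul a b => 
      induction b using TensorProduct.induction_on with
      | zero => simp
      | add b c ha hb => simp only [map_add, tmul_add, ha, hb]
      | tmul b c => simp
  · apply LinearMap.ext; intro x
    induction x using TensorProduct.induction_on with
    | zero => simp
    | add a b ha hb => simp only [map_add, ha, hb]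
    | tmul a b => 
      induction b using TensorProduct.induction_on with
      | zero => simp
      | add b c ha hb => simp only [map_add, tmul_add, ha, hb]
      | tmul b c => simp

lemma tor_isZero [Module.Flat C S] [Module.Flat C X] (M : ModuleCat.{0} C) (i : ℕ) (hi : 0 < i) :
    Limits.IsZero (((Tor (ModuleCat.{0} S) i).obj (ModuleCat.of S X)).obj ((bcF C S).obj M)) := by
  obtain ⟨n, rfl⟩ : ∃ n, i = n + 1 := ⟨i - 1, by omega⟩
  have := bcF_exact C S
  let P := projectiveResolution M
  have h := tens_exact C S X _ (P.complex_exactAt_succ n)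
  have e := (((bcF C S).mapProjectiveResolution P).isoLeftDerivedObj 
    ((MonoidalCategory.tensoringLeft (ModuleCat.{0} S)).obj
      (ModuleCat.of S X)) (n+1))
  refine Limits.IsZero.of_iso ?_ e
  have h2 : HomologicalComplex.ExactAt ((((MonoidalCategory.tensoringLeft (ModuleCat.{0} S)).obj
      (ModuleCat.of S X)).mapHomologicalComplex (ComplexShape.down ℕ)).obj (((bcF C S).mapProjectiveResolution P).complex)) (n+1) := h
  exact (HomologicalComplex.exactAt_iff_isZero_homology _ _).1 h2

end TorVanish

section Factor
variable {S : Type} [CommRing S]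

lemma homology_smul {K L : ChainComplex (ModuleCat.{0} S) ℕ} (r : S) (f : K ⟶ L) (n : ℕ) :
    (HomologicalComplex.homologyFunctor (ModuleCat.{0} S) (ComplexShape.down ℕ) n).map (r • f) =
    r • (HomologicalComplex.homologyFunctor (ModuleCat.{0} S) (ComplexShape.down ℕ) n).map f :=
  ShortComplex.homologyMap_smul
    ((HomologicalComplex.shortComplexFunctor (ModuleCat.{0} S) (ComplexShape.down ℕ) n).map f) r

lemma leftDerived_smul (F : ModuleCat.{0} S ⥤ ModuleCat.{0} S) [F.Additive] [F.Linear S] (r : S)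
    (n : ℕ) (M : ModuleCat.{0} S) :
    (F.leftDerived n).map (r • 𝟙 M) = r • 𝟙 _ := by
  let P := projectiveResolution M
  rw [F.leftDerived_map_eq n (r • 𝟙 M) (P := P) (Q := P) (r • 𝟙 _)]
  · rw [Functor.comp_map, Functor.map_smul, homology_smul, Linear.smul_comp, Linear.comp_smul]
    rw [CategoryTheory.Functor.map_id, CategoryTheory.Functor.map_id, Category.id_comp, Iso.hom_inv_id]
  · ext : 1
    · simp only [HomologicalComplex.comp_f, HomologicalComplex.smul_f_apply,
        Linear.smul_comp, Category.id_comp,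
        ChainComplex.single₀_map_f_zero]
      exact ((Linear.comp_smul _ _ _ _ _ _).trans (congrArg (r • ·) (Category.comp_id (P.π.f 0)))).symm

lemma leftDerived_app_smul (F : ModuleCat.{0} S ⥤ ModuleCat.{0} S) [F.Additive] (r : S)
    (n : ℕ) (M : ModuleCat.{0} S) (α : F ⟶ F) (hα : ∀ N, α.app N = r • 𝟙 _):
    (NatTrans.leftDerived α n).app M = r • 𝟙 _ := by
  let P := projectiveResolution M
  rw [ProjectiveResolution.leftDerived_app_eq α P]
  have : ((NatTrans.mapHomologicalComplex α _).app P.complex) = r • 𝟙 _ := by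
    ext i : 1
    simp [hα]
    rfl
  rw [this, homology_smul, Linear.smul_comp, Linear.comp_smul,
    CategoryTheory.Functor.map_id, Category.id_comp, Iso.hom_inv_id]

open MonoidalCategory in
lemma tor_map_smul (X M : ModuleCat.{0} S) (r : S) (n : ℕ) :
    ((Tor (ModuleCat.{0} S) n).obj X).map (r • 𝟙 M) = r • 𝟙 _ := by
  have : Functor.Linear S ((MonoidalCategory.tensoringLeft (ModuleCat.{0} S)).obj X) := by
    constructor; simp
  exact leftDerived_smul ((MonoidalCategory.tensoringLeft (ModuleCat.{0} S)).obj X) r n M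

open MonoidalCategory in
lemma tor_app_smul (X M : ModuleCat.{0} S) (r : S) (n : ℕ) :
    ((Tor (ModuleCat.{0} S) n).map (r • 𝟙 X)).app M = r • 𝟙 _ := by
  refine leftDerived_app_smul ((MonoidalCategory.tensoringLeft (ModuleCat.{0} S)).obj X) r n M _ ?_
  intro N
  simp

lemma fac_quot (I I' : Ideal S) (h : I ≤ I') (r : S) (hr : ∀ f ∈ I', r * f ∈ I) :
    ∃ (a : ModuleCat.of S (S ⧸ I) ⟶ ModuleCat.of S (S ⧸ I'))
      (b : ModuleCat.of S (S ⧸ I') ⟶ ModuleCat.of S (S ⧸ I)), a ≫ b = r • 𝟙 _ := by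
  refine ⟨ModuleCat.ofHom (Submodule.mapQ I I' LinearMap.id h),
    ModuleCat.ofHom (Submodule.mapQ I' I (LinearMap.lsmul S S r) hr), ?_⟩
  refine ModuleCat.hom_ext (LinearMap.ext fun x => ?_)
  obtain ⟨x, rfl⟩ := Submodule.Quotient.mk_surjective _ x
  rfl

lemma tor_annih (I I' J J' : Ideal S) (hI : I ≤ I') (hJ : J ≤ J') (r s : S)
    (hr : ∀ f ∈ I', r * f ∈ I) (hs : ∀ f ∈ J', s * f ∈ J) (n : ℕ)
    (hz : Limits.IsZero (((Tor (ModuleCat.{0} S) n).obj (ModuleCat.of S (S ⧸ I'))).obj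
      (ModuleCat.of S (S ⧸ J')))) :
    r * s ∈ Module.annihilator S (((Tor (ModuleCat.{0} S) n).obj (ModuleCat.of S (S ⧸ I))).obj
      (ModuleCat.of S (S ⧸ J))) := by
  obtain ⟨a, b, hab⟩ := fac_quot I I' hI r hr
  obtain ⟨c, d, hcd⟩ := fac_quot J J' hJ s hs
  have h1 := tor_app_smul (ModuleCat.of S (S ⧸ I)) (ModuleCat.of S (S ⧸ J)) r n
  have h2 := tor_map_smul (ModuleCat.of S (S ⧸ I')) (ModuleCat.of S (S ⧸ J)) s n
  rw [← hab, Functor.map_comp, NatTrans.comp_app] at h1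
  rw [← hcd, Functor.map_comp] at h2
  have h3 : s • 𝟙 (((Tor (ModuleCat.{0} S) n).obj (ModuleCat.of S (S ⧸ I'))).obj
      (ModuleCat.of S (S ⧸ J))) = 0 := by
    rw [← h2, hz.eq_of_tgt (((Tor (ModuleCat.{0} S) n).obj (ModuleCat.of S (S ⧸ I'))).map c) 0]
    simp
  have h4 : (r * s) • 𝟙 (((Tor (ModuleCat.{0} S) n).obj (ModuleCat.of S (S ⧸ I))).obj
      (ModuleCat.of S (S ⧸ J))) = 0 := by
    rw [mul_comm, mul_smul, ← h1, ← Linear.smul_comp, ← Category.comp_id (NatTrans.app _ _),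
      ← Linear.comp_smul, h3]
    simp
  rw [Module.mem_annihilator]
  intro m
  have := congrArg (fun f => f.hom m) h4
  exact this

end Factor

section PolyVanish

lemma flat_quot (K A C S : Type) [Field K] [CommRing A] [CommRing C] [CommRing S] [Algebra K A]
    [Algebra K C] [Algebra C S] (e : C ⊗[K] A ≃ₐ[C] S) (φ : A →+* S)
    (he : ∀ a, e (1 ⊗ₜ a) = φ a) (I : Ideal A) : Module.Flat C (S ⧸ I.map φ) := by
  let g : A →ₐ[K] A ⧸ I := Ideal.Quotient.mkₐ K I
  have hg : Function.Surjective g := Ideal.Quotient.mkₐ_surjective K I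
  let m : C ⊗[K] A →ₐ[C] C ⊗[K] (A ⧸ I) :=
    Algebra.TensorProduct.map (AlgHom.id C C) g
  have hm : Function.Surjective m := by
    have := LinearMap.lTensor_surjective C (g := g.toLinearMap) hg
    exact this
  let ψ : S →ₐ[C] C ⊗[K] (A ⧸ I) := m.comp (e.symm : S →ₐ[C] C ⊗[K] A)
  have hψ : Function.Surjective ψ := hm.comp e.symm.surjective
  have hk : RingHom.ker ψ = I.map φ := by
    have h1 : RingHom.ker m = I.map (Algebra.TensorProduct.includeRight : A →ₐ[K] C ⊗[K] A) := by
      have := Algebra.TensorProduct.lTensor_ker (A := C) g hg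
      rw [show RingHom.ker g = I from Ideal.Quotient.mkₐ_ker K I] at this
      rw [← this]
      rfl
    have h2 : RingHom.ker ψ = (RingHom.ker m).map (e : C ⊗[K] A ≃+* S) := by
      ext x
      have : x ∈ (RingHom.ker m).map (e : C ⊗[K] A ≃+* S) ↔ x ∈ (RingHom.ker m).comap (e : C ⊗[K] A ≃+* S).symm := by
        rw [← Ideal.map_comap_of_equiv]; rfl
      rw [this, Ideal.mem_comap, RingHom.mem_ker, RingHom.mem_ker]
      rfl
    have h3 : φ = (e : C ⊗[K] A →+* S).comp ((Algebra.TensorProduct.includeRight : A →ₐ[K] C ⊗[K] A) : A →+* C ⊗[K] A) := by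
      ext a; exact (he a).symm
    rw [h2, h1, h3, ← Ideal.map_map]
    rfl
  rw [← hk]
  exact Module.Flat.of_linearEquiv (Ideal.quotientKerAlgEquivOfSurjective hψ).toLinearEquiv
variable {K : Type} [Field K] {n : ℕ}

variable (K) in
def e0 (p : Fin n → Prop) [DecidablePred p] :
    MvPolynomial {i // ¬ p i} K ⊗[K] MvPolynomial {i // p i} K ≃+* MvPolynomial (Fin n) K :=
  ((algebraTensorAlgEquiv K (MvPolynomial {i // ¬ p i} K)).toRingEquiv.trans
    (sumAlgEquiv K {i // p i} {i // ¬ p i}).symm.toRingEquiv).trans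
      (renameEquiv K (Equiv.sumCompl p)).toRingEquiv

lemma e0_tmul (p : Fin n → Prop) [DecidablePred p] (c : MvPolynomial {i // ¬ p i} K)
    (a : MvPolynomial {i // p i} K) : e0 K p (c ⊗ₜ a) = rename (Equiv.sumCompl p)
      ((sumAlgEquiv K {i // p i} {i // ¬ p i}).symm
        (c • MvPolynomial.map (algebraMap K (MvPolynomial {i // ¬ p i} K)) a)) := by
  rw [← algebraTensorAlgEquiv_tmul]; rfl

lemma e0_left (p : Fin n → Prop) [DecidablePred p] (c : MvPolynomial {i // ¬ p i} K) :
    e0 K p (c ⊗ₜ 1) = rename Subtype.val c := by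
  rw [e0_tmul, map_one, Algebra.smul_def, mul_one]
  change rename (Equiv.sumCompl p) ((sumAlgEquiv K {i // p i} {i // ¬ p i}).symm (C c)) = _
  induction c using MvPolynomial.induction_on with
  | C r => rw [sumAlgEquiv_symm_C_C, rename_C, rename_C]
  | add a b ha hb => simp only [map_add, ha, hb]
  | mul_X a x ha =>
    rw [C_mul, map_mul, map_mul, ha, sumAlgEquiv_symm_C_X, rename_X, map_mul, rename_X,
      Equiv.sumCompl_apply_inr]

lemma e0_right (p : Fin n → Prop) [DecidablePred p] (c : MvPolynomial {i // p i} K) :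
    e0 K p (1 ⊗ₜ c) = rename Subtype.val c := by
  rw [e0_tmul, one_smul]
  induction c using MvPolynomial.induction_on with
  | C r => 
    rw [map_C]
    change rename (Equiv.sumCompl p) ((sumAlgEquiv K {i // p i} {i // ¬ p i}).symm (C (C r))) = _
    rw [sumAlgEquiv_symm_C_C, rename_C, rename_C]
  | add a b ha hb => simp only [map_add, ha, hb]
  | mul_X a x ha =>
    rw [map_mul, map_mul, map_mul, ha, map_X, sumAlgEquiv_symm_X, rename_X, map_mul, rename_X,
      Equiv.sumCompl_apply_inl]

lemma span_supported (s : Set (MvPolynomial (Fin n) K)) (p : Fin n → Prop)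
    (hs : ∀ f ∈ s, f ∈ supported K {i | p i}) :
    ∃ I : Ideal (MvPolynomial {i // p i} K),
      Ideal.span s = I.map (rename (Subtype.val : {i // p i} → Fin n) : _ →ₐ[K] _).toRingHom := by
  refine ⟨Ideal.span ((rename (Subtype.val : {i // p i} → Fin n) : _ →ₐ[K] _) ⁻¹' s), ?_⟩
  rw [Ideal.map_span]
  congr 1
  refine (Set.image_preimage_eq_of_subset ?_).symm
  intro f hf
  have := hs f hf
  rw [supported_eq_range_rename] at this
  exact this

lemma tor_poly_isZero (p : Fin n → Prop) [DecidablePred p] (s t : Set (MvPolynomial (Fin n) K))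
    (hs : ∀ f ∈ s, f ∈ supported K {i | p i}) (ht : ∀ f ∈ t, f ∈ supported K {i | ¬ p i})
    (i : ℕ) (hi : 0 < i) :
    Limits.IsZero (((Tor (ModuleCat.{0} (MvPolynomial (Fin n) K)) i).obj
      (ModuleCat.of _ (MvPolynomial (Fin n) K ⧸ Ideal.span s))).obj
      (ModuleCat.of _ (MvPolynomial (Fin n) K ⧸ Ideal.span t))) := by
  obtain ⟨I, hI⟩ := span_supported s p hs
  obtain ⟨J, hJ⟩ := span_supported t _ ht
  rw [hI, hJ]
  let C := MvPolynomial {i // ¬ p i} K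
  let A := MvPolynomial {i // p i} K
  let S := MvPolynomial (Fin n) K
  let : Algebra C S := (rename (Subtype.val : {i // ¬ p i} → Fin n) : C →ₐ[K] S).toRingHom.toAlgebra
  let e : C ⊗[K] A ≃ₐ[C] S := AlgEquiv.ofRingEquiv (f := e0 K p) (fun r => e0_left p r)
  have f1 : Module.Flat C S := Module.Flat.of_linearEquiv e.symm.toLinearEquiv
  have f2 := flat_quot K A C S e (rename (Subtype.val : {i // p i} → Fin n) : A →ₐ[K] S).toRingHom
    (fun a => e0_right p a) I
  have hz := tor_isZero C S (S ⧸ I.map (rename (Subtype.val : {i // p i} → Fin n) : A →ₐ[K] S).toRingHom)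
    (ModuleCat.of C (C ⧸ J)) i hi
  refine Limits.IsZero.of_iso hz (Functor.mapIso _ ?_)
  exact LinearEquiv.toModuleIso (Algebra.TensorProduct.quotIdealMapEquivTensorQuot S J).toLinearEquiv

end PolyVanish

section Borel

variable {K : Type} [Field K] {n : ℕ}

lemma mem_of_dual {I : Ideal (PS K n)} {x : PS K n}
    (h : ∀ l : PS K n →ₗ[K] K, (∀ f ∈ I, l f = 0) → l x = 0) : x ∈ I := by
  rw [← Ideal.Quotient.eq_zero_iff_mem]
  rw [← Module.forall_dual_apply_eq_zero_iff K]
  intro φ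
  refine h (φ ∘ₗ (Ideal.Quotient.mkₐ K I).toLinearMap) ?_
  intro f hf
  have : Ideal.Quotient.mkₐ K I f = 0 := Ideal.Quotient.eq_zero_iff_mem.2 hf
  rw [LinearMap.comp_apply, AlgHom.toLinearMap_apply, this, map_zero]

lemma limit_mem {I : Ideal (PS K n)} (F : Polynomial (PS K n))
    (hF : Set.Infinite {t : K | F.eval (C t) ∈ I}) : F.eval 0 ∈ I := by
  apply mem_of_dual
  intro l hl
  let p : Polynomial K := ∑ d ∈ F.support, Polynomial.monomial d (l (F.coeff d))
  have hp : ∀ t, p.eval t = l (F.eval (C t)) := by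
    intro t
    rw [Polynomial.eval_eq_sum (p := F), Polynomial.sum, map_sum, Polynomial.eval_finsetSum]
    refine Finset.sum_congr rfl fun d _ => ?_
    rw [Polynomial.eval_monomial, ← map_pow, mul_comm (F.coeff d), ← smul_eq_C_mul, map_smul,
      smul_eq_mul, mul_comm]
  have : p = 0 := by
    apply Polynomial.eq_zero_of_infinite_isRoot
    refine hF.mono ?_
    intro t ht
    change p.eval t = 0
    rw [hp]
    exact hl _ ht
  have h0 := hp 0
  rw [this] at h0
  simpa using h0.symm

lemma closure_mem [Infinite K] {I : Ideal (PS K n)} (hI : IsBorelFixed K n I)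
    (M : Matrix (Fin n) (Fin n) K) (hM : ∀ i j : Fin n, j < i → M i j = 0) {f : PS K n}
    (hf : f ∈ I) : aeval (fun i => ∑ j, M j i • (X j : PS K n)) f ∈ I := by
  let F : Polynomial (PS K n) := aeval (fun i => Polynomial.C (∑ j, M j i • (X j : PS K n))
    + Polynomial.X * Polynomial.C (X i)) f
  have hF : ∀ r : PS K n, F.eval r = aeval (fun i => ∑ j, M j i • (X j : PS K n) + r * X i) f := by
    intro r
    simp only [F]
    clear_value F
    clear hf F
    induction f using MvPolynomial.induction_on with
    | C a =>
      rw [aeval_C, aeval_C]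
      change Polynomial.eval r (Polynomial.C (C a)) = C a
      rw [Polynomial.eval_C]
    | add a b ha hb => rw [map_add, map_add, Polynomial.eval_add, ha, hb]
    | mul_X a x ha =>
      rw [map_mul, map_mul, Polynomial.eval_mul, ha, aeval_X, aeval_X,
        Polynomial.eval_add, Polynomial.eval_C, Polynomial.eval_mul, Polynomial.eval_X,
        Polynomial.eval_C]
  have : F.eval 0 ∈ I := by
    apply limit_mem
    have hfin : (Set.range (fun i => - M i i)).Finite := Set.finite_range _
    refine hfin.infinite_compl.mono ?_
    intro t ht
    have hut : (M + t • (1 : Matrix (Fin n) (Fin n) K)).BlockTriangular id := by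
      intro i j hij
      have : j < i := hij
      simp [hM i j this, this.ne']
    have hdet : (M + t • (1 : Matrix (Fin n) (Fin n) K)).det ≠ 0 := by
      rw [Matrix.det_of_isUpperTriangular hut, Finset.prod_ne_zero_iff]
      intro i _ h0
      apply ht
      refine ⟨i, ?_⟩
      simp at h0
      linear_combination -h0
    have := hI (Matrix.GeneralLinearGroup.mkOfDetNeZero _ hdet) (fun i j hij => hut hij)
    have h2 := Ideal.mem_map_of_mem (coordChange K n (Matrix.GeneralLinearGroup.mkOfDetNeZero _ hdet)) hf
    rw [this] at h2
    change F.eval (C t) ∈ I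
    rw [hF]
    convert h2 using 1
    rw [coordChange]
    congr 1
    congr 1
    funext i
    change _ = ∑ j, (M + t • (1 : Matrix (Fin n) (Fin n) K)) j i • _
    simp [add_smul, Finset.sum_add_distrib, Matrix.one_apply, smul_eq_C_mul]
  rw [hF] at this
  simpa using this

lemma monomial_mem [Infinite K] {I : Ideal (PS K n)} (hI : IsBorelFixed K n I) {f : PS K n}
    (hf : f ∈ I) (m : Fin n →₀ ℕ) (hm : m ∈ f.support) : monomial m (1 : K) ∈ I := by
  apply mem_of_dual
  intro l hl
  let p : PS K n := ∑ m ∈ f.support, monomial m (f.coeff m * l (monomial m 1))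
  have hp : p = 0 := by
    apply MvPolynomial.funext
    intro t
    rw [map_zero]
    have h1 := hl _ (closure_mem hI (Matrix.diagonal t)
      (fun i j hij => Matrix.diagonal_apply_ne _ hij.ne') hf)
    rw [← h1, aeval_def, eval₂_eq, map_sum, map_sum]
    refine Finset.sum_congr rfl fun d _ => ?_
    have h2 : ∀ i, ∑ j, Matrix.diagonal t j i • (X j : PS K n) = t i • X i := by
      intro i
      rw [Finset.sum_eq_single i]
      · simp
      · intro j _ hj; simp [Matrix.diagonal_apply_ne _ hj]
      · simp
    simp only [h2, smul_pow]
    rw [Finset.prod_smul, eval_monomial]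
    change _ = l (C _ * _)
    rw [← smul_eq_C_mul, map_smul, map_smul, monomial_eq]
    simp only [map_one, one_mul, Finsupp.prod, smul_eq_mul]
    ring
  have h3 : coeff m p = f.coeff m * l (monomial m 1) := by
    simp only [p, coeff_sum, coeff_monomial]
    simp_all
  rw [hp, coeff_zero] at h3
  exact (mul_eq_zero.1 h3.symm).resolve_left (mem_support_iff.1 hm)

lemma push_mem [Infinite K] {I : Ideal (PS K n)} (hI : IsBorelFixed K n I) (k : Fin n)
    (m : Fin n →₀ ℕ) (hm : monomial m (1 : K) ∈ I) :
    ∃ N : ℕ, (X k : PS K n) ^ N * monomial (m.filter (· < k)) 1 ∈ I := by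
  let M : Matrix (Fin n) (Fin n) K := fun j i => if j = min i k then 1 else 0
  have h1 := closure_mem hI M (by
    intro i j hij
    simp only [M]
    rw [if_neg]
    intro h
    exact absurd (h.le.trans (min_le_left _ _)) (not_le.2 hij)) hm
  have h2 : (fun i => ∑ j, M j i • (X j : PS K n)) = fun i => X (min i k) := by
    funext i
    simp [M]
  rw [h2, ← Finsupp.filter_add_filter_not m (· < k)] at h1
  rw [show monomial (m.filter (· < k) + m.filter (fun i => ¬ i < k)) (1 : K) =
    monomial (m.filter (· < k)) 1 * monomial (m.filter (fun i => ¬ i < k)) 1 by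
      rw [monomial_mul, one_mul], map_mul, aeval_monomial, aeval_monomial, map_one, one_mul,
      one_mul] at h1
  refine ⟨∑ i ∈ (m.filter (fun i => ¬ i < k)).support, (m.filter (fun i => ¬ i < k)) i, ?_⟩
  convert h1 using 1
  rw [mul_comm]
  congr 1
  · rw [monomial_eq, map_one, one_mul]
    refine Finsupp.prod_congr fun i hi => ?_
    have : i < k := by
      rw [Finsupp.support_filter, Finset.mem_filter] at hi
      exact hi.2
    rw [min_eq_left this.le]
  · rw [← Finset.prod_pow_eq_pow_sum]
    refine Finset.prod_congr rfl fun i hi => ?_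
    have : ¬ i < k := by
      rw [Finsupp.support_filter, Finset.mem_filter] at hi
      exact hi.2
    beta_reduce
    rw [min_eq_right (not_lt.1 this)]

lemma borel_sat [Infinite K] {I : Ideal (PS K n)} (hI : IsBorelFixed K n I) (k : Fin n) :
    ∃ (s : Set (PS K n)) (N : ℕ), (∀ f ∈ s, f ∈ supported K {i | i < k}) ∧ I ≤ Ideal.span s ∧
      ∀ f ∈ Ideal.span s, X k ^ N * f ∈ I := by
  classical
  let s : Set (PS K n) := {g | g ∈ supported K {i | i < k} ∧ ∃ N : ℕ, X k ^ N * g ∈ I}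
  have h1 : ∀ f ∈ Ideal.span s, ∃ N : ℕ, X k ^ N * f ∈ I := by
    intro f hf
    induction hf using Submodule.span_induction with
    | mem x h => exact h.2
    | zero => exact ⟨0, by simp⟩
    | add a b _ _ ha hb =>
      obtain ⟨N, hN⟩ := ha
      obtain ⟨P, hP⟩ := hb
      refine ⟨N + P, ?_⟩
      have : (X k : PS K n) ^ (N + P) * (a + b) = X k ^ P * (X k ^ N * a) + X k ^ N * (X k ^ P * b) := by
        ring
      rw [this]
      exact I.add_mem (I.mul_mem_left _ hN) (I.mul_mem_left _ hP)
    | smul c a _ ha =>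
      obtain ⟨N, hN⟩ := ha
      refine ⟨N, ?_⟩
      rw [smul_eq_mul, mul_left_comm]
      exact I.mul_mem_left _ hN
  obtain ⟨T, hT⟩ : (Ideal.span s).FG := IsNoetherian.noetherian _
  have h2 : ∀ f : T, ∃ N : ℕ, X k ^ N * f.1 ∈ I := fun f => h1 f.1 (by
    rw [← hT]; exact Submodule.subset_span f.2)
  choose N hN using h2
  refine ⟨s, ∑ f, N f, fun f hf => hf.1, ?_, ?_⟩
  · intro f hf
    rw [← f.support_sum_monomial_coeff]
    refine Ideal.sum_mem _ fun m hm => ?_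
    have h3 := push_mem hI k m (monomial_mem hI hf m hm)
    have h4 : monomial m (f.coeff m) = monomial (m.filter (fun i => ¬ i < k)) (f.coeff m) *
        monomial (m.filter (· < k)) 1 := by
      rw [monomial_mul, mul_one, add_comm, Finsupp.filter_add_filter_not]
    rw [h4]
    refine Ideal.mul_mem_left _ _ (Ideal.subset_span ⟨?_, h3⟩)
    rw [mem_supported, vars_monomial one_ne_zero]
    intro i hi
    rw [Finset.mem_coe, Finsupp.support_filter, Finset.mem_filter] at hi
    exact hi.2
  · intro f hf
    rw [← hT] at hf
    induction hf using Submodule.span_induction with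
    | mem x h =>
      have := Finset.add_sum_erase Finset.univ N (Finset.mem_univ ⟨x, h⟩)
      rw [← this, pow_add, mul_right_comm]
      exact I.mul_mem_right _ (hN ⟨x, h⟩)
    | zero => simp
    | add a b _ _ ha hb => rw [mul_add]; exact I.add_mem ha hb
    | smul c a _ ha =>
      rw [smul_eq_mul, mul_left_comm]
      exact I.mul_mem_left _ ha

lemma op_op (f : PS K n) : opMap K n (opMap K n f) = f := by
  have : (opMap K n).comp (opMap K n) = AlgHom.id K _ := by
    ext i
    simp [opMap]
  exact DFunLike.congr_fun this f

lemma op_supported (f : PS K n) (k : Fin n) (hf : f ∈ supported K {i | i < k.rev}) :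
    opMap K n f ∈ supported K {i | ¬ i < k} := by
  have h : supported K {i | i < k.rev} ≤ (supported K {i | ¬ i < k}).comap (opMap K n) := by
    refine Algebra.adjoin_le ?_
    rintro _ ⟨i, hi, rfl⟩
    have hi' : i < k.rev := hi
    change opMap K n (X i) ∈ supported K {i | ¬ i < k}
    rw [opMap, aeval_X]
    rw [X_mem_supported]
    change ¬ i.rev < k
    have := Fin.lt_rev_iff.1 hi'
    exact not_lt.2 this.le
  exact h hf

lemma op_borel_sat [Infinite K] {J : Ideal (PS K n)}
    (hJ : IsBorelFixed K n (Ideal.map (opMap K n) J)) (k : Fin n) :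
    ∃ (s : Set (PS K n)) (N : ℕ), (∀ f ∈ s, f ∈ supported K {i | ¬ i < k}) ∧ J ≤ Ideal.span s ∧
      ∀ f ∈ Ideal.span s, X k ^ N * f ∈ J := by
  obtain ⟨s, N, hs, h1, h2⟩ := borel_sat hJ k.rev
  have hJJ : (J.map (opMap K n)).map (opMap K n) = J := by
    refine le_antisymm ?_ ?_
    · rw [Ideal.map_le_iff_le_comap, Ideal.map_le_iff_le_comap]
      intro f hf
      rw [Ideal.mem_comap, Ideal.mem_comap, op_op]
      exact hf
    · intro f hf
      rw [← op_op f]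
      exact Ideal.mem_map_of_mem _ (Ideal.mem_map_of_mem _ hf)
  refine ⟨opMap K n '' s, N, ?_, ?_, ?_⟩
  · rintro _ ⟨f, hf, rfl⟩
    exact op_supported f k (hs f hf)
  · rw [← Ideal.map_span]
    conv_lhs => rw [← hJJ]
    exact Ideal.map_mono h1
  · rw [← Ideal.map_span]
    intro f hf
    have hf2 : opMap K n f ∈ Ideal.span s := by
      have h3 : (Ideal.span s).map (opMap K n) ≤ (Ideal.span s).comap (opMap K n) := by
        rw [Ideal.map_le_iff_le_comap]
        intro g hg
        rw [Ideal.mem_comap, Ideal.mem_comap, op_op]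
        exact hg
      exact h3 hf
    have h4 := Ideal.mem_map_of_mem (opMap K n) (h2 _ hf2)
    rw [hJJ, map_mul, op_op, map_pow] at h4
    simpa [opMap] using h4

lemma krull_of_pow (Q : Ideal (PS K n)) (h : ∀ k : Fin n, ∃ N : ℕ, (X k : PS K n) ^ N ∈ Q) :
    ringKrullDim (PS K n ⧸ Q) ≤ 0 := by
  have : Ring.KrullDimLE 0 (PS K n ⧸ Q) := by
    refine Ring.KrullDimLE.mk₀ fun P hP => ?_
    let φ := Ideal.Quotient.mk Q
    have hp : (P.comap φ).IsPrime := Ideal.comap_isPrime φ P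
    have hX : ∀ k, (X k : PS K n) ∈ P.comap φ := by
      intro k
      obtain ⟨N, hN⟩ := h k
      refine hp.mem_of_pow_mem N ?_
      rw [Ideal.mem_comap, Ideal.Quotient.eq_zero_iff_mem.2 hN]
      exact P.zero_mem
    have hm : (RingHom.ker (constantCoeff : PS K n →+* K)).IsMaximal :=
      RingHom.ker_isMaximal_of_surjective _ (fun r => ⟨C r, by simp⟩)
    have hle : RingHom.ker (constantCoeff : PS K n →+* K) ≤ P.comap φ := by
      intro f hf
      have h5 : ∀ g : PS K n, g - C (constantCoeff g) ∈ P.comap φ := by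
        intro g
        induction g using MvPolynomial.induction_on with
        | C a => simp
        | add a b ha hb =>
          have : a + b - C (constantCoeff (a + b)) = (a - C (constantCoeff a)) + (b - C (constantCoeff b)) := by
            rw [map_add, map_add]; ring
          rw [this]
          exact Ideal.add_mem _ ha hb
        | mul_X a x ha =>
          have : a * X x - C (constantCoeff (a * X x)) = a * X x := by simp
          rw [this]
          exact Ideal.mul_mem_left _ _ (hX x)
      have h6 := h5 f
      rw [RingHom.mem_ker] at hf
      rwa [hf, map_zero, sub_zero] at h6
    have heq := hm.eq_of_le hp.ne_top hle
    rw [heq] at hm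
    rw [← Ideal.map_comap_of_surjective φ Ideal.Quotient.mk_surjective P]
    refine Ideal.IsMaximal.map_of_surjective_of_ker_le Ideal.Quotient.mk_surjective ?_
    exact Ideal.comap_mono bot_le
  exact_mod_cast Ring.krullDimLE_iff.1 this

end Borel

/-- (From the proof of Proposition 2.10, Caviglia–Murai): if `I` is Borel-fixed, `J` is
opposite Borel-fixed and `i > 0`, then the Krull dimension of `Tor_i(S/I, S/J)`
(i.e. of `S/Ann(Tor_i(S/I, S/J))`) is zero. -/
theorem krullDim_tor_borel_eq_zero [Infinite K]
    (I J : Ideal (PS K n)) (hI : IsBorelFixed K n I)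
    (hJ : IsBorelFixed K n (Ideal.map (opMap K n) J)) (i : ℕ) (hi : 0 < i) :
    ringKrullDim (PS K n ⧸ Module.annihilator (PS K n)
      (((Tor (ModuleCat (PS K n)) i).obj (ModuleCat.of (PS K n) (PS K n ⧸ I))).obj
        (ModuleCat.of (PS K n) (PS K n ⧸ J)))) ≤ 0 := by
  refine krull_of_pow _ fun k => ?_
  obtain ⟨s, N, hs, h1, h2⟩ := borel_sat hI k
  obtain ⟨t, P, ht, h3, h4⟩ := op_borel_sat hJ k
  refine ⟨N + P, ?_⟩
  rw [pow_add]
  exact tor_annih I (Ideal.span s) J (Ideal.span t) h1 h3 _ _ h2 h4 i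
    (tor_poly_isZero (· < k) s t hs ht i hi)

end
end
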